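/- Onset of photon loss (mass condition): let n be a nonnegative bounded solution of the Kompaneets equation with initial data n₀ (not identically 0) satisfying x² n₀(x) → 0 as x → ∞. If N(n₀) > N(n̂₀) = ∫₀^∞ x²/(eˣ − 1) dx = 2ζ(3), then there exists a finite time t with n(0,t) > 0; i.e., the onset time t* of photon loss is finite. -/

import Mathlib

/-!
Suppose that no photons are lost, so that `n(0,t) = 0` for all `t > 0`. In the variable `y = log x`
the function `m(y,t) = n(e^y,t)` solves
`m_t = m_yy + (e^y - 1 + 2 e^{-y} m) m_y + (2 e^y - 2) m` on the line and tends to `0` as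
`y → -∞`. The total mass `∫ e^y m` is then conserved, and it exceeds the mass of the equilibrium
`p(y) = n̂₀(e^y)`. The contradiction comes from a functional that blows up in finite time, although
it is bounded as long as the solution is.

The functional is `F(t) = ∫ φ e^y (m - p)`, where `φ' = -q` and the weight `q` solves the linear
equation `q' = -1 + q (e^y - 3 + 2 e^{-y} p)` and satisfies `1/4 ≤ e^y q ≤ 20`. With this choice
the linear part of the equation, taken around the equilibrium, integrates to the mass excess, and
formally `F' = ∫ e^y (m - p) + ∫ q (m - p)²`. By the Cauchy–Schwarz inequality the last term is at
least a multiple of `F²` once `F` is large, so that `F' ≥ a + c max(F,0)²` with `a > 0`. Since `F`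
is bounded below by the mass, this is impossible on a long time interval. As `φ ~ e^{-y}` is
unbounded at `-∞`, the test function is cut off at `y ≈ -L`; the error is the mean of `m` near
`-L`, which tends to `0` as `L → ∞` after integration in time, exactly because `n(0,t) = 0`.

The hypotheses only provide derivatives pointwise, with no local integrability, so the weak form of
the equation is not immediate from differentiation under the integral. On a short time interval
`[t, t + τ]` the maximum principle compares the solution, up to `o(τ)`, with the heat flow of
`m(·,t)` plus `τ` times the lower order terms. Testing this expansion yields the right derivative
of `∫ θ m`, which is continuous in time and hence integrates to the weak form.
-/

open MeasureTheory Filter Set Real Topology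

/-- The Kompaneets photon flux `J(x,u) = x² u'(x) + (x² - 2x) u(x) + u(x)²`. -/
noncomputable def kompFlux (u : ℝ → ℝ) (x : ℝ) : ℝ :=
  x ^ 2 * deriv u x + (x ^ 2 - 2 * x) * u x + u x ^ 2

/-- The Bose--Einstein equilibria `n̂_μ(x) = x²/(e^{x+μ} - 1)`. -/
noncomputable def nhat (μ x : ℝ) : ℝ := x ^ 2 / (Real.exp (x + μ) - 1)

/-- A (global-in-time) nonnegative solution of the Kompaneets equation
`∂ₜ n = ∂ₓ J(x, n(·,t))` on `(0,∞) × (0,∞)` with initial data `n₀`: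
nonnegative, bounded, `C^{2,1}` in the interior, attaining the initial data,
continuous into `L¹`, and with `x² n → 0` and `x² ∂ₓ n → 0` as `x → ∞`,
uniformly on the indicated time sets.  No boundary condition at `x = 0`. -/
structure IsKompSol (n : ℝ → ℝ → ℝ) (n₀ : ℝ → ℝ) : Prop where
  nonneg : ∀ x t : ℝ, 0 < x → 0 < t → 0 ≤ n x t
  bounded : ∃ M : ℝ, ∀ x t : ℝ, 0 < x → 0 < t → n x t ≤ M
  init : ∀ x : ℝ, 0 < x → n x 0 = n₀ x
  contOn : ContinuousOn (fun p : ℝ × ℝ => n p.1 p.2)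
    ((Set.Ioi (0:ℝ)) ×ˢ (Set.Ioi (0:ℝ)))
  diff_x : ∀ t : ℝ, 0 < t → ∀ x : ℝ, 0 < x → DifferentiableAt ℝ (fun y => n y t) x
  diff_xx : ∀ t : ℝ, 0 < t → ∀ x : ℝ, 0 < x →
    DifferentiableAt ℝ (deriv (fun y => n y t)) x
  diff_t : ∀ x : ℝ, 0 < x → ∀ t : ℝ, 0 < t → DifferentiableAt ℝ (fun τ => n x τ) t
  pde : ∀ x : ℝ, 0 < x → ∀ t : ℝ, 0 < t →
    deriv (fun τ => n x τ) t = deriv (fun y => kompFlux (fun z => n z t) y) x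
  l1init : Filter.Tendsto (fun t => ∫ x in Set.Ioi (0:ℝ), |n x t - n₀ x|)
    (𝓝[>] (0:ℝ)) (nhds 0)
  decay : ∀ T : ℝ, 0 < T → ∀ ε : ℝ, 0 < ε → ∃ R : ℝ, 0 < R ∧
    ∀ x : ℝ, R ≤ x → ∀ t : ℝ, 0 ≤ t → t < T → x ^ 2 * n x t < ε
  decay' : ∀ T : ℝ, 0 < T → ∀ ε : ℝ, 0 < ε → ∃ R : ℝ, 0 < R ∧
    ∀ x : ℝ, R ≤ x → ∀ t : ℝ, 1 / x ^ 2 ≤ t → t < T →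
      |x ^ 2 * deriv (fun y => n y t) x| < ε

/-! ### Parabolic maximum principle -/

lemma deriv_deriv_nonpos_of_isLocalMax {f : ℝ → ℝ} {y : ℝ} (h : IsLocalMax f y)
    (hf : ContinuousAt f y) : deriv (deriv f) y ≤ 0 := by
  by_contra! hpos
  have hmin : IsLocalMin f y := isLocalMin_of_deriv_deriv_pos hpos h.deriv_eq_zero hf
  have hconst : f =ᶠ[𝓝 y] fun _ => f y := by
    filter_upwards [h, hmin] with x h₁ h₂ using le_antisymm h₁ h₂
  have : deriv (deriv f) y = 0 := by rw [hconst.deriv.deriv_eq]; simp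
  exact hpos.ne' this

lemma deriv_nonneg_of_eventually_le_left {g : ℝ → ℝ} {τ : ℝ} (h : ∀ᶠ s in 𝓝[<] τ, g s ≤ g τ) :
    0 ≤ deriv g τ := by
  by_cases hd : DifferentiableAt ℝ g τ
  · have hslope : Tendsto (slope g τ) (𝓝[<] τ) (𝓝 (deriv g τ)) :=
      (hasDerivAt_iff_tendsto_slope.1 hd.hasDerivAt).mono_left
        (nhdsWithin_mono _ fun s (hs : s < τ) => hs.ne)
    refine ge_of_tendsto hslope ?_
    filter_upwards [h, self_mem_nhdsWithin] with s hs hlt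
    rw [slope_def_field]
    exact div_nonneg_of_nonpos (sub_nonpos.2 hs) (sub_nonpos.2 (le_of_lt hlt))
  · rw [deriv_zero_of_not_differentiableAt hd]

lemma nonpos_of_parabolic_comparison {z : ℝ → ℝ → ℝ} {a b h : ℝ}
    (hz : ContinuousOn (fun p : ℝ × ℝ => z p.1 p.2) (Icc 0 h ×ˢ Icc a b))
    (hinit : ∀ y ∈ Icc a b, z 0 y ≤ 0)
    (hleft : ∀ τ ∈ Icc 0 h, z τ a ≤ 0) (hright : ∀ τ ∈ Icc 0 h, z τ b ≤ 0)
    (hpde : ∀ τ ∈ Ioc 0 h, ∀ y ∈ Ioo a b, deriv (z τ) y = 0 → deriv (deriv (z τ)) y ≤ 0 →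
      deriv (fun s => z s y) τ < 0) :
    ∀ τ ∈ Icc 0 h, ∀ y ∈ Icc a b, z τ y ≤ 0 := by
  intro τ₀ hτ₀ y₀ hy₀
  obtain ⟨⟨τ, y⟩, ⟨hτ, hy⟩, hmax⟩ := (isCompact_Icc.prod isCompact_Icc).exists_isMaxOn
    (s := Icc 0 h ×ˢ Icc a b) ⟨(τ₀, y₀), hτ₀, hy₀⟩ hz
  have hle : ∀ s ∈ Icc 0 h, ∀ x ∈ Icc a b, z s x ≤ z τ y := fun s hs x hx =>
    hmax (⟨hs, hx⟩ : (s, x) ∈ Icc 0 h ×ˢ Icc a b)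
  refine (hle τ₀ hτ₀ y₀ hy₀).trans ?_
  by_contra! hpos
  have hτ' : τ ∈ Ioc 0 h :=
    ⟨lt_of_le_of_ne hτ.1 (by rintro rfl; exact hpos.not_ge (hinit y hy)), hτ.2⟩
  have hy' : y ∈ Ioo a b :=
    ⟨lt_of_le_of_ne hy.1 (by rintro rfl; exact hpos.not_ge (hleft τ hτ)),
      lt_of_le_of_ne hy.2 (by rintro rfl; exact hpos.not_ge (hright τ hτ))⟩
  have hspace : IsLocalMax (z τ) y := by
    filter_upwards [Icc_mem_nhds hy'.1 hy'.2] with x hx using hle τ hτ x hx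
  have htime : ∀ᶠ s in 𝓝[<] τ, z s y ≤ z τ y := by
    filter_upwards [Ioo_mem_nhdsLT hτ'.1] with s hs
    exact hle s ⟨hs.1.le, hs.2.le.trans hτ.2⟩ y hy
  have hcont : ContinuousAt (z τ) y :=
    (hz.comp (f := fun x => (τ, x)) (by fun_prop) fun x hx => ⟨hτ, hx⟩).continuousAt
      (Icc_mem_nhds hy'.1 hy'.2)
  exact (hpde τ hτ' y hy' hspace.deriv_eq_zero
    (deriv_deriv_nonpos_of_isLocalMax hspace hcont)).not_ge
    (deriv_nonneg_of_eventually_le_left htime)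

/-! ### Gaussian averages -/

local notation "γ" => ProbabilityTheory.gaussianReal 0 1

/-- The average of `f` over the normal distribution of mean `y` and standard deviation `σ`; with
`σ = √(2τ)` this is the heat flow of `f` at time `τ`. -/
noncomputable def gaussAvg (f : ℝ → ℝ) (y σ : ℝ) : ℝ := ∫ z, f (y + σ * z) ∂γ

/-- The derivative of `gaussAvg f · σ` with the differentiation moved onto the Gaussian density. It
makes sense for `f` merely continuous. -/
noncomputable def gaussAvgDeriv (f : ℝ → ℝ) (y σ : ℝ) : ℝ := ∫ z, f (y + σ * z) * (z / σ) ∂γ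

lemma integrable_abs_gaussianReal : Integrable (fun z : ℝ => |z|) γ :=
  ((ProbabilityTheory.memLp_id_gaussianReal 1).integrable le_rfl).abs

@[simp] lemma gaussAvg_zero (f : ℝ → ℝ) (y : ℝ) : gaussAvg f y 0 = f y := by simp [gaussAvg]

lemma gaussAvg_neg (f : ℝ → ℝ) (y σ : ℝ) : gaussAvg (-f) y σ = -gaussAvg f y σ := by
  simp [gaussAvg, integral_neg]

section BoundedFunction

variable {f : ℝ → ℝ} {C : ℝ}

lemma continuous_gaussAvg (hf : Continuous f) (hC : ∀ y, |f y| ≤ C) :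
    Continuous fun p : ℝ × ℝ => gaussAvg f p.1 p.2 :=
  continuous_of_dominated (bound := fun _ => C)
    (fun _ => (by fun_prop : Continuous _).aestronglyMeasurable)
    (fun _ => ae_of_all _ fun _ => hC _) (integrable_const C) (ae_of_all _ fun _ => by fun_prop)

lemma abs_mul_div_le (hC : ∀ y, |f y| ≤ C) {s σ : ℝ} (hs : 0 < s) (hσ : s ≤ σ) (x z : ℝ) :
    |f x * (z / σ)| ≤ C / s * |z| := by
  have hC₀ : 0 ≤ C := (abs_nonneg _).trans (hC 0)
  have hσ₀ : 0 < σ := hs.trans_le hσ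
  rw [abs_mul, abs_div, abs_of_pos hσ₀]
  calc |f x| * (|z| / σ) ≤ C * (|z| / s) := by have := hC x; gcongr
    _ = C / s * |z| := by ring

lemma continuous_gaussAvgDeriv (hf : Continuous f) (hC : ∀ y, |f y| ≤ C) {σ : ℝ} (hσ : 0 < σ) :
    Continuous fun y => gaussAvgDeriv f y σ :=
  continuous_of_dominated (bound := fun z => C / σ * |z|)
    (fun _ => (by fun_prop : Continuous _).aestronglyMeasurable)
    (fun _ => ae_of_all _ fun _ => abs_mul_div_le hC hσ le_rfl _ _)
    (integrable_abs_gaussianReal.const_mul _) (ae_of_all _ fun _ => by fun_prop)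

lemma abs_gaussAvgDeriv_le (hC : ∀ y, |f y| ≤ C) {s σ : ℝ} (hs : 0 < s) (hσ : s ≤ σ) (y : ℝ) :
    |gaussAvgDeriv f y σ| ≤ C / s * ∫ z, |z| ∂γ := by
  rw [gaussAvgDeriv, ← integral_const_mul, ← Real.norm_eq_abs]
  exact norm_integral_le_of_norm_le (integrable_abs_gaussianReal.const_mul (C / s))
    (ae_of_all _ fun z => abs_mul_div_le hC hs hσ (y + σ * z) z)

end BoundedFunction

lemma integral_comp_add_mul (g : ℝ → ℝ) (y : ℝ) {σ : ℝ} (hσ : 0 < σ) :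
    ∫ z, g (y + σ * z) = σ⁻¹ * ∫ s, g s := by
  rw [Measure.integral_comp_mul_left (fun s => g (y + s)) σ, integral_add_left_eq_self g y,
    abs_of_pos (inv_pos.2 hσ), smul_eq_mul]

section GaussianDensity

local notation "ρ" => ProbabilityTheory.gaussianPDFReal 0 1

lemma hasDerivAt_gaussianPDFReal (z : ℝ) : HasDerivAt ρ (-(z * ρ z)) z := by
  have h : HasDerivAt (fun z : ℝ => -z ^ 2 / 2) (-z) z :=
    (((hasDerivAt_pow 2 z).neg).div_const 2).congr_deriv (by norm_num; ring)
  have := h.exp.const_mul (√(2 * π))⁻¹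
  unfold ProbabilityTheory.gaussianPDFReal
  simp only [sub_zero, NNReal.coe_one, mul_one]
  exact this.congr_deriv (by ring)

lemma continuous_gaussianPDFReal : Continuous ρ :=
  continuous_iff_continuousAt.2 fun z => (hasDerivAt_gaussianPDFReal z).continuousAt

lemma abs_mul_gaussianPDFReal_le (z : ℝ) : |z * ρ z| ≤ 1 := by
  have hpi : (√(2 * π))⁻¹ ≤ 1 :=
    inv_le_one_of_one_le₀ (Real.one_le_sqrt.2 (by linarith [Real.pi_gt_three]))
  have hexp : |z| ≤ exp (z ^ 2 / 2) := by
    have := Real.add_one_le_exp (z ^ 2 / 2)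
    nlinarith [sq_nonneg (|z| - 1), sq_abs z]
  have hρ : ρ z = (√(2 * π))⁻¹ * (exp (z ^ 2 / 2))⁻¹ := by
    simp [ProbabilityTheory.gaussianPDFReal, neg_div, Real.exp_neg]
  rw [hρ, abs_mul, abs_of_nonneg (by positivity : 0 ≤ (√(2 * π))⁻¹ * (exp (z ^ 2 / 2))⁻¹)]
  calc |z| * ((√(2 * π))⁻¹ * (exp (z ^ 2 / 2))⁻¹)
      ≤ exp (z ^ 2 / 2) * (1 * (exp (z ^ 2 / 2))⁻¹) := by gcongr
    _ = 1 := by field_simp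

lemma integral_gaussianReal_eq_integral_density (g : ℝ → ℝ) (y : ℝ) {σ : ℝ} (hσ : 0 < σ) :
    ∫ z, g (y + σ * z) ∂γ = σ⁻¹ * ∫ s, g s * ρ ((s - y) / σ) := by
  rw [ProbabilityTheory.integral_gaussianReal_eq_integral_smul one_ne_zero,
    ← integral_comp_add_mul (fun s => g s * ρ ((s - y) / σ)) y hσ]
  congr 1 with z
  rw [add_sub_cancel_left, mul_div_cancel_left₀ z hσ.ne', smul_eq_mul, mul_comm]

/-- Substituting `s = y + σ z` moves the dependence on `y` from the merely continuous `f` to the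
smooth density. -/
lemma hasDerivAt_gaussAvg_of_continuous {f : ℝ → ℝ} (hf : Continuous f) (hs : HasCompactSupport f)
    (y : ℝ) {σ : ℝ} (hσ : 0 < σ) :
    HasDerivAt (fun x => gaussAvg f x σ) (gaussAvgDeriv f y σ) y := by
  have hρ := continuous_gaussianPDFReal
  have hvalue : gaussAvgDeriv f y σ
      = σ⁻¹ * ∫ s, f s * ((s - y) / σ * ρ ((s - y) / σ) * σ⁻¹) := by
    have := integral_gaussianReal_eq_integral_density (fun s => f s * ((s - y) / σ / σ)) y hσ
    simp only [add_sub_cancel_left, mul_div_cancel_left₀ _ hσ.ne'] at this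
    rw [gaussAvgDeriv, this]
    congr 2 with s
    ring
  simp only [gaussAvg, integral_gaussianReal_eq_integral_density _ _ hσ]
  rw [hvalue]
  refine HasDerivAt.const_mul _ (hasDerivAt_integral_of_dominated_loc_of_deriv_le (s := univ)
    (F := fun x s => f s * ρ ((s - x) / σ))
    (F' := fun x s => f s * ((s - x) / σ * ρ ((s - x) / σ) * σ⁻¹))
    (bound := fun s => |f s| * σ⁻¹) univ_mem
    (Eventually.of_forall fun _ => (by fun_prop : Continuous _).aestronglyMeasurable)
    (Continuous.integrable_of_hasCompactSupport (by fun_prop) hs.mul_right)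
    (by fun_prop : Continuous _).aestronglyMeasurable
    (ae_of_all _ fun s x _ => ?_)
    ((hf.integrable_of_hasCompactSupport hs).abs.mul_const _) (ae_of_all _ fun s x _ => ?_)).2
  · rw [norm_mul, norm_mul, Real.norm_eq_abs, Real.norm_eq_abs, norm_inv, Real.norm_eq_abs,
      abs_of_pos hσ]
    have hle := abs_mul_gaussianPDFReal_le ((s - x) / σ)
    calc |f s| * (|(s - x) / σ * ρ ((s - x) / σ)| * σ⁻¹) ≤ |f s| * (1 * σ⁻¹) := by gcongr
      _ = |f s| * σ⁻¹ := by ring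
  · have hlin : HasDerivAt (fun x => (s - x) / σ) (-1 / σ) x :=
      ((hasDerivAt_id x).const_sub s).div_const σ
    refine (((hasDerivAt_gaussianPDFReal ((s - x) / σ)).comp x hlin).const_mul (f s)).congr_deriv ?_
    ring

end GaussianDensity

section HeatFlow

variable {f : ℝ → ℝ}

lemma integrable_comp_add_mul_gaussianReal (hf : Continuous f) (hs : HasCompactSupport f)
    (y σ : ℝ) : Integrable (fun z => f (y + σ * z)) γ := by
  obtain ⟨C, hC⟩ := hf.bounded_above_of_compact_support hs
  exact (integrable_const C).mono' (by fun_prop : Continuous _).aestronglyMeasurable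
    (ae_of_all _ fun _ => hC _)

lemma hasDerivAt_gaussAvg (hf : ContDiff ℝ 1 f) (hs : HasCompactSupport f) (y σ : ℝ) :
    HasDerivAt (fun x => gaussAvg f x σ) (gaussAvg (deriv f) y σ) y := by
  have hf₀ := hf.continuous
  have hf₁ := hf.continuous_deriv_one
  obtain ⟨C, hC⟩ := hf₁.bounded_above_of_compact_support hs.deriv
  exact (hasDerivAt_integral_of_dominated_loc_of_deriv_le (s := univ) (bound := fun _ => C)
    (F' := fun x z => deriv f (x + σ * z)) univ_mem
    (Eventually.of_forall fun _ => (by fun_prop : Continuous _).aestronglyMeasurable)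
    (integrable_comp_add_mul_gaussianReal hf₀ hs y σ)
    (by fun_prop : Continuous _).aestronglyMeasurable (ae_of_all _ fun _ _ _ => hC _)
    (integrable_const C) (ae_of_all _ fun z x _ =>
      ((hf.differentiable one_ne_zero).differentiableAt.hasDerivAt).comp_add_const x (σ * z))).2

lemma hasDerivAt_sqrt_two_mul {τ : ℝ} (hτ : 0 < τ) :
    HasDerivAt (fun τ => √(2 * τ)) (1 / √(2 * τ)) τ :=
  (((hasDerivAt_id τ).const_mul 2).sqrt (by simpa using hτ.ne')).congr_deriv (by
    rw [id, mul_div_mul_left _ _ two_ne_zero])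

lemma hasDerivAt_gaussAvg_sqrt (hf : ContDiff ℝ 1 f) (hs : HasCompactSupport f) (y : ℝ) {τ : ℝ}
    (hτ : 0 < τ) : HasDerivAt (fun τ => gaussAvg f y (√(2 * τ)))
      (gaussAvgDeriv (deriv f) y (√(2 * τ))) τ := by
  have hf₀ := hf.continuous
  have hf₁ := hf.continuous_deriv_one
  obtain ⟨C, hC⟩ := hf₁.bounded_above_of_compact_support hs.deriv
  refine (hasDerivAt_integral_of_dominated_loc_of_deriv_le (s := Ioi (τ / 2))
    (F' := fun τ z => deriv f (y + √(2 * τ) * z) * (z / √(2 * τ)))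
    (bound := fun z => C / √τ * |z|) (Ioi_mem_nhds (by linarith))
    (Eventually.of_forall fun _ => (by fun_prop : Continuous _).aestronglyMeasurable)
    (integrable_comp_add_mul_gaussianReal hf₀ hs y _)
    (by fun_prop : Continuous _).aestronglyMeasurable
    (ae_of_all _ fun z s hs => abs_mul_div_le hC (Real.sqrt_pos.2 hτ)
      (Real.sqrt_le_sqrt (by linarith [mem_Ioi.1 hs])) _ _)
    (integrable_abs_gaussianReal.const_mul _) (ae_of_all _ fun z s hs => ?_)).2
  have hpos : 0 < s := lt_trans (by linarith) (mem_Ioi.1 hs)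
  have hinner := ((hasDerivAt_sqrt_two_mul hpos).mul_const z).const_add y
  exact (((hf.differentiable one_ne_zero).differentiableAt.hasDerivAt).comp s hinner).congr_deriv
    (by ring)

end HeatFlow

/-! ### Short-time expansion of parabolic solutions -/

/-- The heat flow of `f` plus `τ g + r`: a comparison function for solutions that start below
`f + r`. -/
noncomputable def heatAnsatz (f g r : ℝ → ℝ) (τ y : ℝ) : ℝ :=
  gaussAvg f y (√(2 * τ)) + τ * g y + r y

section HeatAnsatz

variable {f g r : ℝ → ℝ}

lemma continuous_gaussAvg_sqrt (hf : Continuous f) (hs : HasCompactSupport f) :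
    Continuous fun p : ℝ × ℝ => gaussAvg f p.2 (√(2 * p.1)) := by
  obtain ⟨C, hC⟩ := hf.bounded_above_of_compact_support hs
  exact (continuous_gaussAvg hf hC).comp
    (by fun_prop : Continuous fun p : ℝ × ℝ => (p.2, √(2 * p.1)))

lemma continuous_heatAnsatz (hf : Continuous f) (hs : HasCompactSupport f) (hg : Continuous g)
    (hr : Continuous r) : Continuous fun p : ℝ × ℝ => heatAnsatz f g r p.1 p.2 := by
  have := continuous_gaussAvg_sqrt hf hs
  unfold heatAnsatz
  fun_prop

lemma deriv_heatAnsatz (hf : ContDiff ℝ 1 f) (hs : HasCompactSupport f) (hg : Differentiable ℝ g)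
    (hr : Differentiable ℝ r) (τ : ℝ) :
    deriv (heatAnsatz f g r τ) = heatAnsatz (deriv f) (deriv g) (deriv r) τ :=
  funext fun y => (((hasDerivAt_gaussAvg hf hs y _).add ((hg y).hasDerivAt.const_mul τ)).add
    (hr y).hasDerivAt).deriv

lemma hasDerivAt_deriv_heatAnsatz (hf : ContDiff ℝ 1 f) (hs : HasCompactSupport f)
    (hg : ContDiff ℝ 2 g) (hr : ContDiff ℝ 2 r) {τ : ℝ} (hτ : 0 < τ) (y : ℝ) :
    HasDerivAt (deriv (heatAnsatz f g r τ)) (gaussAvgDeriv (deriv f) y (√(2 * τ))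
      + τ * deriv (deriv g) y + deriv (deriv r) y) y := by
  rw [deriv_heatAnsatz hf hs (hg.differentiable two_ne_zero) (hr.differentiable two_ne_zero)]
  exact ((hasDerivAt_gaussAvg_of_continuous hf.continuous_deriv_one hs.deriv y
    (Real.sqrt_pos.2 (by linarith))).add
      ((hg.differentiable_deriv_two y).hasDerivAt.const_mul τ)).add
    (hr.differentiable_deriv_two y).hasDerivAt

lemma hasDerivAt_heatAnsatz_time (hf : ContDiff ℝ 1 f) (hs : HasCompactSupport f) {τ : ℝ}
    (hτ : 0 < τ) (y : ℝ) : HasDerivAt (fun s => heatAnsatz f g r s y)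
      (gaussAvgDeriv (deriv f) y (√(2 * τ)) + g y) τ :=
  (((hasDerivAt_gaussAvg_sqrt hf hs y hτ).add ((hasDerivAt_id τ).mul_const (g y))).add_const
    (r y)).congr_deriv (by rw [one_mul])

end HeatAnsatz

/-- The terms of order at most one in the parabolic equation `w_t = w_yy + b(y, w) w_y + c(y) w`. -/
noncomputable def lowerOrder (b : ℝ → ℝ → ℝ) (c w : ℝ → ℝ) (y : ℝ) : ℝ :=
  b y (w y) * deriv w y + c y * w y

/-- `u t y` solves `u_t = u_yy + b(y, u) u_y + c(y) u` on the line for `t > 0`. The derivatives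
exist pointwise; they are not assumed to be jointly continuous or locally integrable. -/
structure IsParabolicSol (b : ℝ → ℝ → ℝ) (c : ℝ → ℝ) (u : ℝ → ℝ → ℝ) : Prop where
  continuous_drift : Continuous fun p : ℝ × ℝ => b p.1 p.2
  continuous_rate : Continuous c
  continuousOn : ContinuousOn (fun p : ℝ × ℝ => u p.1 p.2) (Ioi 0 ×ˢ univ)
  differentiable : ∀ t, 0 < t → Differentiable ℝ (u t)
  differentiable_deriv : ∀ t, 0 < t → Differentiable ℝ (deriv (u t))
  hasDerivAt_time : ∀ t, 0 < t → ∀ y,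
    HasDerivAt (fun s => u s y) (deriv (deriv (u t)) y + lowerOrder b c (u t) y) t

namespace IsParabolicSol

variable {b : ℝ → ℝ → ℝ} {c : ℝ → ℝ} {u : ℝ → ℝ → ℝ} {t : ℝ}

lemma lowerOrder_neg (b : ℝ → ℝ → ℝ) (c w : ℝ → ℝ) :
    lowerOrder (fun y v => b y (-v)) c (-w) = -lowerOrder b c w := by
  ext y
  simp only [lowerOrder, Pi.neg_apply, neg_neg, deriv.neg']
  ring

lemma neg (h : IsParabolicSol b c u) :
    IsParabolicSol (fun y v => b y (-v)) c fun t => -u t where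
  continuous_drift :=
    h.continuous_drift.comp (by fun_prop : Continuous fun p : ℝ × ℝ => (p.1, -p.2))
  continuous_rate := h.continuous_rate
  continuousOn := h.continuousOn.neg
  differentiable t ht := (h.differentiable t ht).neg
  differentiable_deriv t ht := by
    rw [deriv.neg']
    exact (h.differentiable_deriv t ht).neg
  hasDerivAt_time t ht y := by
    rw [lowerOrder_neg, deriv.neg', deriv.fun_neg]
    exact (h.hasDerivAt_time t ht y).neg.congr_deriv (by simp only [Pi.neg_apply]; ring)

lemma contDiff_one (h : IsParabolicSol b c u) (ht : 0 < t) : ContDiff ℝ 1 (u t) :=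
  contDiff_one_iff_deriv.2 ⟨h.differentiable t ht, (h.differentiable_deriv t ht).continuous⟩

lemma continuous_drift_comp (h : IsParabolicSol b c u) {w : ℝ → ℝ} (hw : Continuous w) :
    Continuous fun y => b y (w y) :=
  h.continuous_drift.comp (continuous_id.prodMk hw)

lemma continuous_lowerOrder (h : IsParabolicSol b c u) {w : ℝ → ℝ} (hw : ContDiff ℝ 1 w) :
    Continuous (lowerOrder b c w) :=
  ((h.continuous_drift_comp hw.continuous).mul hw.continuous_deriv_one).add
    (h.continuous_rate.mul hw.continuous)

lemma continuousAt_shift (h : IsParabolicSol b c u) (ht : 0 < t) (y : ℝ) :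
    ContinuousAt (fun p : ℝ × ℝ => u (t + p.1) p.2) (0, y) :=
  ContinuousAt.comp (g := fun p : ℝ × ℝ => u p.1 p.2) (f := fun p : ℝ × ℝ => (t + p.1, p.2))
    (h.continuousOn.continuousAt (prod_mem_nhds (Ioi_mem_nhds (by simpa using ht)) univ_mem))
    (by fun_prop)

/-- The hypothesis `hsuper` says that the ansatz is a strict supersolution wherever it touches
`u`. -/
lemma le_heatAnsatz (h : IsParabolicSol b c u) (ht : 0 < t) {f g r : ℝ → ℝ}
    (hf : ContDiff ℝ 1 f) (hs : HasCompactSupport f) (hg : ContDiff ℝ 2 g) (hr : ContDiff ℝ 2 r)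
    {p q τ₀ : ℝ} (hinit : ∀ y ∈ Icc p q, u t y ≤ heatAnsatz f g r 0 y)
    (hleft : ∀ τ ∈ Icc 0 τ₀, u (t + τ) p ≤ heatAnsatz f g r τ p)
    (hright : ∀ τ ∈ Icc 0 τ₀, u (t + τ) q ≤ heatAnsatz f g r τ q)
    (hsuper : ∀ τ ∈ Icc 0 τ₀, ∀ y ∈ Icc p q,
      b y (u (t + τ) y) * heatAnsatz (deriv f) (deriv g) (deriv r) τ y + c y * u (t + τ) y
        + τ * deriv (deriv g) y + deriv (deriv r) y < g y) :
    ∀ τ ∈ Icc 0 τ₀, ∀ y ∈ Icc p q, u (t + τ) y ≤ heatAnsatz f g r τ y := by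
  have hcont : ContinuousOn (fun x : ℝ × ℝ => u (t + x.1) x.2) (Icc 0 τ₀ ×ˢ Icc p q) :=
    h.continuousOn.comp (f := fun x : ℝ × ℝ => (t + x.1, x.2)) (by fun_prop)
      fun x hx => ⟨add_pos_of_pos_of_nonneg ht hx.1.1, mem_univ _⟩
  suffices ∀ τ ∈ Icc 0 τ₀, ∀ y ∈ Icc p q, u (t + τ) y - heatAnsatz f g r τ y ≤ 0 from
    fun τ hτ y hy => sub_nonpos.1 (this τ hτ y hy)
  refine nonpos_of_parabolic_comparison (z := fun τ y => u (t + τ) y - heatAnsatz f g r τ y)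
    (hcont.sub (continuous_heatAnsatz hf.continuous hs hg.continuous hr.continuous).continuousOn)
    (fun y hy => by simpa using hinit y hy) (fun τ hτ => sub_nonpos.2 (hleft τ hτ))
    (fun τ hτ => sub_nonpos.2 (hright τ hτ)) fun τ hτ y hy hslope hcurv => ?_
  have htτ : 0 < t + τ := add_pos ht hτ.1
  have hg₁ := hg.differentiable two_ne_zero
  have hr₁ := hr.differentiable two_ne_zero
  have hansatz : Differentiable ℝ (heatAnsatz f g r τ) := fun x =>
    (((hasDerivAt_gaussAvg hf hs x _).differentiableAt.add ((hg₁ x).const_mul τ)).add (hr₁ x))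
  have hderiv : deriv (fun y => u (t + τ) y - heatAnsatz f g r τ y)
      = fun y => deriv (u (t + τ)) y - deriv (heatAnsatz f g r τ) y :=
    funext fun x => deriv_fun_sub (h.differentiable _ htτ x) (hansatz x)
  have hderiv₂ := hasDerivAt_deriv_heatAnsatz hf hs hg hr hτ.1 y
  rw [hderiv, ((h.differentiable_deriv _ htτ y).hasDerivAt.fun_sub hderiv₂).deriv] at hcurv
  rw [hderiv, sub_eq_zero, deriv_heatAnsatz hf hs hg₁ hr₁] at hslope
  have htime := ((h.hasDerivAt_time _ htτ y).comp_const_add t τ).fun_sub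
    (hasDerivAt_heatAnsatz_time (g := g) (r := r) hf hs hτ.1 y)
  rw [htime.deriv, lowerOrder, hslope]
  linarith [hsuper τ (Ioc_subset_Icc_self hτ) y (Ioo_subset_Icc_self hy)]

lemma eventually_supersolution (h : IsParabolicSol b c u) (ht : 0 < t) {f g r : ℝ → ℝ}
    (hf : ContDiff ℝ 1 f) (hs : HasCompactSupport f) (hg : ContDiff ℝ 2 g) (hr : ContDiff ℝ 2 r)
    {K : Set ℝ} (hK : IsCompact K)
    (hsuper : ∀ y ∈ K, b y (u t y) * (deriv f y + deriv r y) + c y * u t y + deriv (deriv r) y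
      < g y) :
    ∀ᶠ τ in 𝓝 (0 : ℝ), ∀ y ∈ K,
      b y (u (t + τ) y) * heatAnsatz (deriv f) (deriv g) (deriv r) τ y + c y * u (t + τ) y
        + τ * deriv (deriv g) y + deriv (deriv r) y < g y := by
  refine hK.eventually_forall_of_forall_eventually fun y hy => ?_
  have hu := h.continuousAt_shift ht y
  have hb : ContinuousAt (fun p : ℝ × ℝ => b p.2 (u (t + p.1) p.2)) (0, y) :=
    ContinuousAt.comp (g := fun p : ℝ × ℝ => b p.1 p.2)
      (f := fun p : ℝ × ℝ => (p.2, u (t + p.1) p.2)) h.continuous_drift.continuousAt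
      (continuousAt_snd.prodMk hu)
  have hg₁ : ContDiff ℝ 1 (deriv g) := ContDiff.deriv' (n := 1) hg
  have hr₁ : ContDiff ℝ 1 (deriv r) := ContDiff.deriv' (n := 1) hr
  have hg₂ := hg₁.continuous_deriv_one
  have hr₂ := hr₁.continuous_deriv_one
  have hansatz := (continuous_heatAnsatz hf.continuous_deriv_one hs.deriv hg₁.continuous
    hr₁.continuous).continuousAt (x := ((0 : ℝ), y))
  have hc := h.continuous_rate
  have hg₀ := hg.continuous
  refine ContinuousAt.eventually_lt
    ((((hb.mul hansatz).add (ContinuousAt.mul ?_ hu)).add ?_).add ?_) ?_ ?_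
  any_goals fun_prop
  simpa [heatAnsatz] using hsuper y hy

lemma eventually_lt_heatAnsatz (h : IsParabolicSol b c u) (ht : 0 < t) {f g r : ℝ → ℝ}
    (hf : Continuous f) (hs : HasCompactSupport f) (hg : Continuous g) (hr : Continuous r) {y : ℝ}
    (hlt : u t y < f y + r y) : ∀ᶠ τ in 𝓝 (0 : ℝ), u (t + τ) y < heatAnsatz f g r τ y := by
  have hpair : ContinuousAt (fun τ : ℝ => (τ, y)) 0 := by fun_prop
  exact ContinuousAt.eventually_lt
    (ContinuousAt.comp (g := fun p : ℝ × ℝ => u (t + p.1) p.2) (f := fun τ : ℝ => (τ, y))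
      (h.continuousAt_shift ht y) hpair)
    (ContinuousAt.comp (g := fun p : ℝ × ℝ => heatAnsatz f g r p.1 p.2)
      (f := fun τ : ℝ => (τ, y)) (continuous_heatAnsatz hf hs hg hr).continuousAt hpair)
    (by simpa [heatAnsatz] using hlt)

lemma eventually_le_heatAnsatz (h : IsParabolicSol b c u) (ht : 0 < t) {f g r : ℝ → ℝ}
    (hf : ContDiff ℝ 1 f) (hs : HasCompactSupport f) (hg : ContDiff ℝ 2 g) (hr : ContDiff ℝ 2 r)
    {p q : ℝ} (hinit : ∀ y ∈ Icc p q, u t y ≤ f y + r y)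
    (hleft : u t p < f p + r p) (hright : u t q < f q + r q)
    (hsuper : ∀ y ∈ Icc p q,
      b y (u t y) * (deriv f y + deriv r y) + c y * u t y + deriv (deriv r) y < g y) :
    ∀ᶠ τ in 𝓝[>] (0 : ℝ), ∀ y ∈ Icc p q, u (t + τ) y ≤ heatAnsatz f g r τ y := by
  have hall := ((h.eventually_lt_heatAnsatz ht hf.continuous hs hg.continuous hr.continuous
    hleft).and (h.eventually_lt_heatAnsatz ht hf.continuous hs hg.continuous hr.continuous
    hright)).and (h.eventually_supersolution ht hf hs hg hr isCompact_Icc hsuper)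
  obtain ⟨δ, hδ, hnear⟩ := Metric.eventually_nhds_iff.1 hall
  filter_upwards [Ioo_mem_nhdsGT hδ] with τ hτ
  have hdist : ∀ s ∈ Icc 0 τ, dist s 0 < δ := fun s hs => by
    rw [Real.dist_0_eq_abs, abs_of_nonneg hs.1]
    exact hs.2.trans_lt hτ.2
  exact h.le_heatAnsatz ht hf hs hg hr (fun y hy => by simpa [heatAnsatz] using hinit y hy)
    (fun s hs => (hnear (hdist s hs)).1.1.le) (fun s hs => (hnear (hdist s hs)).1.2.le)
    (fun s hs => (hnear (hdist s hs)).2) τ ⟨hτ.1.le, le_rfl⟩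

end IsParabolicSol

namespace IsParabolicSol

variable {b : ℝ → ℝ → ℝ} {c : ℝ → ℝ} {u : ℝ → ℝ → ℝ} {t : ℝ}

/-- The defect `1 - χ` of a bump function is the shape of the lateral barrier. -/
lemma exists_lateral_barrier {d : ℝ → ℝ} (hd : Continuous d) {R η : ℝ} (hR : 0 < R)
    (hη : 0 < η) :
    ∃ r : ℝ → ℝ, ContDiff ℝ 2 r ∧ (∀ y, 0 ≤ r y) ∧ (∀ y ∈ Icc (-R) R, r y = 0) ∧
      0 < r (-(R + 1)) ∧ 0 < r (R + 1) ∧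
      ∀ y ∈ Icc (-(R + 1)) (R + 1), d y * deriv r y + deriv (deriv r) y < η := by
  let χ : ContDiffBump (0 : ℝ) := ⟨R, R + 1, hR, by linarith⟩
  have hχ : ContDiff ℝ 2 (fun y => 1 - χ y) := contDiff_const.sub χ.contDiff
  set ρ : ℝ → ℝ := fun y => 1 - χ y
  have hρ₁ : ContDiff ℝ 1 (deriv ρ) := ContDiff.deriv' (n := 1) hχ
  have hzero : ∀ y, R + 1 ≤ |y| → χ y = 0 := fun y hy =>
    χ.zero_of_le_dist (by simpa [Real.dist_eq] using hy)
  obtain ⟨B, hB⟩ := (isCompact_Icc (a := -(R + 1)) (b := R + 1)).exists_bound_of_continuousOn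
    ((hd.mul hρ₁.continuous).add hρ₁.continuous_deriv_one).continuousOn
  have hB₀ : 0 ≤ B := (norm_nonneg _).trans (hB 0 ⟨by linarith, by linarith⟩)
  have hω : 0 < η / (B + 1) := by positivity
  refine ⟨fun y => η / (B + 1) * ρ y, contDiff_const.mul hχ, fun y => ?_, fun y hy => ?_, ?_, ?_,
    fun y hy => ?_⟩
  · exact mul_nonneg hω.le (sub_nonneg.2 χ.le_one)
  · have : χ y = 1 := χ.one_of_mem_closedBall (by simpa [abs_le] using hy)
    simp [ρ, this]
  · simpa only [ρ, hzero (-(R + 1)) (by rw [abs_neg]; exact le_abs_self _), sub_zero,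
      mul_one] using hω
  · simpa only [ρ, hzero (R + 1) (le_abs_self _), sub_zero, mul_one] using hω
  · simp only [deriv_const_mul_field']
    calc d y * (η / (B + 1) * deriv ρ y) + η / (B + 1) * deriv (deriv ρ) y
        = η / (B + 1) * (d y * deriv ρ y + deriv (deriv ρ) y) := by ring
      _ ≤ η / (B + 1) * B := by gcongr; exact (le_abs_self _).trans (hB y hy)
      _ < η := by rw [div_mul_eq_mul_div, div_lt_iff₀ (by positivity)]; linarith

lemma eventually_le_expansion (h : IsParabolicSol b c u) (ht : 0 < t) {f : ℝ → ℝ}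
    (hf : ContDiff ℝ 1 f) (hs : HasCompactSupport f) {R η : ℝ} (hR : 0 < R) (hη : 0 < η)
    (heq : ∀ y ∈ Icc (-(R + 1)) (R + 1), f =ᶠ[𝓝 y] u t) :
    ∀ᶠ τ in 𝓝[>] (0 : ℝ), ∀ y ∈ Icc (-R) R,
      u (t + τ) y ≤ gaussAvg f y (√(2 * τ)) + τ * (lowerOrder b c (u t) y + η) := by
  have hu := h.contDiff_one ht
  obtain ⟨r, hr, hr₀, hrR, hrl, hrr, hrη⟩ :=
    exists_lateral_barrier (h.continuous_drift_comp hu.continuous) hR (half_pos hη)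
  obtain ⟨P, hP⟩ := exists_polynomial_near_of_continuousOn (-(R + 1)) (R + 1) _
    (h.continuous_lowerOrder hu).continuousOn (η / 4) (by positivity)
  have hg : ContDiff ℝ 2 fun y => P.eval y + 3 / 4 * η := by
    simpa only [← Polynomial.coe_aeval_eq_eval] using (P.contDiff_aeval 2).add contDiff_const
  have hfu : ∀ y ∈ Icc (-(R + 1)) (R + 1), f y = u t y := fun y hy => (heq y hy).eq_of_nhds
  filter_upwards [h.eventually_le_heatAnsatz ht hf hs hg hr
    (fun y hy => by rw [hfu y hy]; linarith [hr₀ y])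
    (by rw [hfu _ ⟨le_rfl, by linarith⟩]; linarith)
    (by rw [hfu _ ⟨by linarith, le_rfl⟩]; linarith)
    (fun y hy => by
      have hlow := (abs_lt.1 (hP y hy)).1
      have hbar := hrη y hy
      rw [(heq y hy).deriv_eq]
      simp only [lowerOrder] at hlow
      linarith), self_mem_nhdsWithin] with τ hle hτ y hy
  have hy' : y ∈ Icc (-(R + 1)) (R + 1) := ⟨by linarith [hy.1], by linarith [hy.2]⟩
  calc u (t + τ) y ≤ gaussAvg f y (√(2 * τ)) + τ * (P.eval y + 3 / 4 * η) := by
        simpa [heatAnsatz, hrR y hy] using hle y hy'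
    _ ≤ gaussAvg f y (√(2 * τ)) + τ * (lowerOrder b c (u t) y + η) := by
        have hlow := (abs_lt.1 (hP y hy')).2
        exact add_le_add_right (mul_le_mul_of_nonneg_left (by linarith) (le_of_lt hτ)) _

lemma eventually_abs_sub_expansion_le (h : IsParabolicSol b c u) (ht : 0 < t) {f : ℝ → ℝ}
    (hf : ContDiff ℝ 1 f) (hs : HasCompactSupport f) {R η : ℝ} (hR : 0 < R) (hη : 0 < η)
    (heq : ∀ y ∈ Icc (-(R + 1)) (R + 1), f =ᶠ[𝓝 y] u t) :
    ∀ᶠ τ in 𝓝[>] (0 : ℝ), ∀ y ∈ Icc (-R) R,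
      |u (t + τ) y - gaussAvg f y (√(2 * τ)) - τ * lowerOrder b c (u t) y| ≤ τ * η := by
  filter_upwards [h.eventually_le_expansion ht hf hs hR hη heq,
    h.neg.eventually_le_expansion ht (f := -f) hf.neg hs.neg hR hη fun y hy => (heq y hy).neg]
    with τ hle hge y hy
  have hle := hle y hy
  have hge := hge y hy
  simp only [Pi.neg_apply, gaussAvg_neg, lowerOrder_neg] at hge
  rw [abs_le]
  constructor <;> linarith

lemma exists_contDiff_eventuallyEq {w : ℝ → ℝ} (hw : ContDiff ℝ 1 w) {R : ℝ} (hR : 0 < R) :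
    ∃ f : ℝ → ℝ, ContDiff ℝ 1 f ∧ HasCompactSupport f ∧ ∀ y ∈ Icc (-R) R, f =ᶠ[𝓝 y] w := by
  let χ : ContDiffBump (0 : ℝ) := ⟨R + 1, R + 2, by linarith, by linarith⟩
  refine ⟨fun y => χ y * w y, χ.contDiff.mul hw, χ.hasCompactSupport.mul_right, fun y hy => ?_⟩
  have hball : y ∈ Metric.ball (0 : ℝ) χ.rIn := by
    rw [Metric.mem_ball, Real.dist_0_eq_abs]
    exact (abs_le.2 hy).trans_lt (lt_add_one R)
  filter_upwards [χ.eventuallyEq_one_of_mem_ball hball] with x hx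
  simp [hx]

end IsParabolicSol

/-! ### Right derivatives of the pairings with test functions -/

section Pairing

variable {θ f : ℝ → ℝ}

lemma integral_mul_deriv_eq_neg_of_hasCompactSupport (hθ : ContDiff ℝ 1 θ)
    (hθs : HasCompactSupport θ) {g g' : ℝ → ℝ} (hg : ∀ y, HasDerivAt g (g' y) y)
    (hg' : Continuous g') : ∫ y, θ y * g' y = -∫ y, deriv θ y * g y := by
  have hg₀ : Continuous g := continuous_iff_continuousAt.2 fun y => (hg y).continuousAt
  exact integral_mul_deriv_eq_deriv_mul_of_integrable
    (fun y _ => (hθ.differentiable one_ne_zero y).hasDerivAt) (fun y _ => hg y)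
    ((hθ.continuous.mul hg').integrable_of_hasCompactSupport hθs.mul_right)
    ((hθ.continuous_deriv_one.mul hg₀).integrable_of_hasCompactSupport hθs.deriv.mul_right)
    ((hθ.continuous.mul hg₀).integrable_of_hasCompactSupport hθs.mul_right)

lemma continuous_integral_mul_gaussAvg_sqrt (hθ : Continuous θ) (hθs : HasCompactSupport θ)
    (hf : Continuous f) (hs : HasCompactSupport f) :
    Continuous fun τ => ∫ y, θ y * gaussAvg f y (√(2 * τ)) := by
  rw [← continuousOn_univ]
  have hheat := continuous_gaussAvg_sqrt hf hs
  refine continuousOn_integral_of_compact_support hθs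
    (by fun_prop : Continuous fun p : ℝ × ℝ => θ p.2 * gaussAvg f p.2 (√(2 * p.1))).continuousOn
    fun τ y _ hy => ?_
  rw [image_eq_zero_of_notMem_tsupport hy, zero_mul]

lemma hasDerivAt_integral_mul_gaussAvg_sqrt (hθ : ContDiff ℝ 1 θ) (hθs : HasCompactSupport θ)
    (hf : ContDiff ℝ 1 f) (hs : HasCompactSupport f) {τ : ℝ} (hτ : 0 < τ) :
    HasDerivAt (fun τ => ∫ y, θ y * gaussAvg f y (√(2 * τ)))
      (-∫ y, deriv θ y * gaussAvg (deriv f) y (√(2 * τ))) τ := by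
  have hf₁ := hf.continuous_deriv_one
  have hθ₀ := hθ.continuous
  obtain ⟨C, hC⟩ := hf₁.bounded_above_of_compact_support hs.deriv
  have hheat := continuous_gaussAvg_sqrt hf.continuous hs
  have hslice : ∀ τ, Continuous fun y => θ y * gaussAvg f y (√(2 * τ)) := fun τ =>
    hθ₀.mul (hheat.comp (by fun_prop : Continuous fun y : ℝ => (τ, y)))
  have hσ : 0 < √(2 * τ) := Real.sqrt_pos.2 (by linarith)
  have hderiv := continuous_gaussAvgDeriv hf₁ hC hσ
  rw [← integral_mul_deriv_eq_neg_of_hasCompactSupport hθ hθs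
    (fun y => hasDerivAt_gaussAvg_of_continuous hf₁ hs.deriv y hσ) hderiv]
  refine (hasDerivAt_integral_of_dominated_loc_of_deriv_le (Ioi_mem_nhds (half_lt_self hτ))
    (Eventually.of_forall fun τ => (hslice τ).aestronglyMeasurable)
    ((hslice τ).integrable_of_hasCompactSupport hθs.mul_right)
    (F' := fun τ y => θ y * gaussAvgDeriv (deriv f) y (√(2 * τ)))
    (bound := fun y => |θ y| * (C / √τ * ∫ z, |z| ∂ProbabilityTheory.gaussianReal 0 1))
    (hθ₀.mul hderiv).aestronglyMeasurable (ae_of_all _ fun y s hs' => ?_) ?_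
    (ae_of_all _ fun y s hs' => ?_)).2
  · rw [norm_mul]
    have hle : √τ ≤ √(2 * s) := Real.sqrt_le_sqrt (by linarith [mem_Ioi.1 hs'])
    exact mul_le_mul_of_nonneg_left (abs_gaussAvgDeriv_le hC (Real.sqrt_pos.2 hτ) hle y)
      (abs_nonneg _)
  · exact ((hθ₀.integrable_of_hasCompactSupport hθs).abs).mul_const _
  · exact (hasDerivAt_gaussAvg_sqrt hf hs y ((half_pos hτ).trans hs')).const_mul _

lemma hasDerivWithinAt_integral_mul_gaussAvg_sqrt (hθ : ContDiff ℝ 1 θ) (hθs : HasCompactSupport θ)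
    (hf : ContDiff ℝ 1 f) (hs : HasCompactSupport f) :
    HasDerivWithinAt (fun τ => ∫ y, θ y * gaussAvg f y (√(2 * τ)))
      (-∫ y, deriv θ y * deriv f y) (Ici 0) 0 := by
  have hlim := (continuous_integral_mul_gaussAvg_sqrt hθ.continuous_deriv_one hθs.deriv
    hf.continuous_deriv_one hs.deriv).fun_neg.tendsto 0
  simp only [mul_zero, Real.sqrt_zero, gaussAvg_zero] at hlim
  refine hasDerivWithinAt_Ici_of_tendsto_deriv (s := Ioi 0)
    (fun τ hτ => (hasDerivAt_integral_mul_gaussAvg_sqrt hθ hθs hf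
      hs hτ).differentiableAt.differentiableWithinAt)
    (continuous_integral_mul_gaussAvg_sqrt hθ.continuous hθs hf.continuous
      hs).continuousWithinAt self_mem_nhdsWithin
    ((hlim.mono_left nhdsWithin_le_nhds).congr' ?_)
  filter_upwards [self_mem_nhdsWithin] with τ hτ
  exact (hasDerivAt_integral_mul_gaussAvg_sqrt hθ hθs hf hs hτ).deriv.symm

end Pairing

namespace IsParabolicSol

variable {b : ℝ → ℝ → ℝ} {c : ℝ → ℝ} {u : ℝ → ℝ → ℝ} {t : ℝ}

lemma eventually_abs_integral_sub_le (h : IsParabolicSol b c u) (ht : 0 < t) {θ f : ℝ → ℝ}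
    (hθ : Continuous θ) (hθs : HasCompactSupport θ) {R η : ℝ} (hR : 0 < R) (hη : 0 < η)
    (hsupp : tsupport θ ⊆ Icc (-R) R) (hf : ContDiff ℝ 1 f) (hs : HasCompactSupport f)
    (heq : ∀ y ∈ Icc (-(R + 1)) (R + 1), f =ᶠ[𝓝 y] u t) :
    ∀ᶠ τ in 𝓝[>] (0 : ℝ), |(∫ y, θ y * u (t + τ) y) - (∫ y, θ y * gaussAvg f y (√(2 * τ)))
      - τ * ∫ y, θ y * lowerOrder b c (u t) y| ≤ τ * η * ∫ y, |θ y| := by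
  have hint : ∀ {w : ℝ → ℝ}, Continuous w → Integrable fun y => θ y * w y := fun hw =>
    (hθ.mul hw).integrable_of_hasCompactSupport hθs.mul_right
  filter_upwards [h.eventually_abs_sub_expansion_le ht hf hs hR hη heq, self_mem_nhdsWithin]
    with τ hexp hτ
  have hu := hint (h.contDiff_one (add_pos ht hτ)).continuous
  have hheat : Integrable fun y => θ y * gaussAvg f y (√(2 * τ)) :=
    hint ((continuous_gaussAvg_sqrt hf.continuous hs).comp
      (by fun_prop : Continuous fun y : ℝ => (τ, y)))
  have hdiff : Integrable fun y => θ y * u (t + τ) y - θ y * gaussAvg f y (√(2 * τ)) :=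
    hu.sub hheat
  have hlow := (hint (h.continuous_lowerOrder (h.contDiff_one ht))).const_mul τ
  rw [← integral_const_mul, ← integral_sub hu hheat, ← integral_sub (hdiff) hlow,
    ← integral_const_mul, ← Real.norm_eq_abs]
  refine norm_integral_le_of_norm_le
    ((hθ.integrable_of_hasCompactSupport hθs).abs.const_mul _) (ae_of_all _ fun y => ?_)
  by_cases hy : y ∈ tsupport θ
  · calc ‖θ y * u (t + τ) y - θ y * gaussAvg f y (√(2 * τ)) - τ * (θ y * lowerOrder b c (u t) y)‖
        = |θ y| * |u (t + τ) y - gaussAvg f y (√(2 * τ)) - τ * lowerOrder b c (u t) y| := by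
          rw [← abs_mul, Real.norm_eq_abs]; ring_nf
      _ ≤ |θ y| * (τ * η) := by gcongr; exact hexp y (hsupp hy)
      _ = τ * η * |θ y| := mul_comm _ _
  · simp [image_eq_zero_of_notMem_tsupport hy]

lemma hasDerivWithinAt_integral_sub_expansion (h : IsParabolicSol b c u) (ht : 0 < t) {θ f : ℝ → ℝ}
    (hθ : Continuous θ) (hθs : HasCompactSupport θ) {R : ℝ} (hR : 0 < R)
    (hsupp : tsupport θ ⊆ Icc (-R) R) (hf : ContDiff ℝ 1 f) (hs : HasCompactSupport f)
    (heq : ∀ y ∈ Icc (-(R + 1)) (R + 1), f =ᶠ[𝓝 y] u t) (hagree : ∀ y, θ y * f y = θ y * u t y) :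
    HasDerivWithinAt (fun τ => (∫ y, θ y * u (t + τ) y) - (∫ y, θ y * gaussAvg f y (√(2 * τ)))
      - τ * ∫ y, θ y * lowerOrder b c (u t) y) 0 (Ioi 0) 0 := by
  rw [hasDerivWithinAt_iff_isLittleO, Asymptotics.isLittleO_iff]
  intro ε hε
  have hmass : 0 ≤ ∫ y, |θ y| := integral_nonneg fun _ => abs_nonneg _
  filter_upwards [h.eventually_abs_integral_sub_le ht hθ hθs hR
    (η := ε / ((∫ y, |θ y|) + 1)) (by positivity) hsupp hf hs heq, self_mem_nhdsWithin]
    with τ hle hτ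
  have hτ₀ : (0 : ℝ) < τ := hτ
  simp only [add_zero, mul_zero, Real.sqrt_zero, gaussAvg_zero, hagree, sub_self, zero_mul,
    sub_zero, smul_zero]
  calc _ ≤ τ * (ε / ((∫ y, |θ y|) + 1)) * ∫ y, |θ y| := hle
    _ = ε * τ * ((∫ y, |θ y|) / ((∫ y, |θ y|) + 1)) := by ring
    _ ≤ ε * τ * 1 := by
      gcongr
      exact div_le_one_of_le₀ (by linarith) (by positivity)
    _ = ε * ‖τ‖ := by rw [mul_one, Real.norm_of_nonneg hτ₀.le]

lemma hasDerivWithinAt_integral_mul (h : IsParabolicSol b c u) (ht : 0 < t) {θ : ℝ → ℝ}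
    (hθ : ContDiff ℝ 1 θ) (hθs : HasCompactSupport θ) :
    HasDerivWithinAt (fun s => ∫ y, θ y * u s y)
      ((∫ y, θ y * lowerOrder b c (u t) y) - ∫ y, deriv θ y * deriv (u t) y) (Ioi t) t := by
  obtain ⟨R, hR, hsupp⟩ := hθs.isCompact.isBounded.subset_closedBall_lt 0 0
  rw [Real.closedBall_eq_Icc, zero_sub, zero_add] at hsupp
  obtain ⟨f, hf, hs, heq⟩ := exists_contDiff_eventuallyEq (h.contDiff_one ht)
    (by linarith : 0 < R + 1)
  have hnear : ∀ y ∈ tsupport θ, f =ᶠ[𝓝 y] u t := fun y hy =>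
    heq y ⟨by linarith [(hsupp hy).1], by linarith [(hsupp hy).2]⟩
  have hagree : ∀ y, θ y * f y = θ y * u t y := fun y => by
    by_cases hy : y ∈ tsupport θ
    · rw [(hnear y hy).eq_of_nhds]
    · simp [image_eq_zero_of_notMem_tsupport hy]
  have hagree_deriv : ∀ y, deriv θ y * deriv f y = deriv θ y * deriv (u t) y := fun y => by
    by_cases hy : y ∈ tsupport θ
    · rw [(hnear y hy).deriv_eq]
    · simp [Function.notMem_support.1 fun hy' => hy (support_deriv_subset hy')]
  have herror := h.hasDerivWithinAt_integral_sub_expansion ht hθ.continuous hθs hR hsupp hf hs heq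
    hagree
  have hheat := (hasDerivWithinAt_integral_mul_gaussAvg_sqrt hθ hθs hf hs).mono Ioi_subset_Ici_self
  have hlinear := ((hasDerivAt_id (0 : ℝ)).mul_const
    (∫ y, θ y * lowerOrder b c (u t) y)).hasDerivWithinAt (s := Ioi 0)
  have hshift : HasDerivWithinAt (fun τ => ∫ y, θ y * u (t + τ) y)
      ((∫ y, θ y * lowerOrder b c (u t) y) - ∫ y, deriv θ y * deriv (u t) y) (Ioi 0) (-t + t) := by
    rw [neg_add_cancel]
    simp only [hagree_deriv] at hheat
    exact (((herror.fun_add hheat).fun_add hlinear).congr_deriv (by ring)).congr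
      (fun τ _ => by simp only [id]; ring) (by simp only [id]; ring)
  have hmaps : MapsTo (fun s => -t + s) (Ioi t) (Ioi 0) := fun s hs => by
    rw [mem_Ioi] at hs ⊢
    linarith
  simpa [Function.comp_def] using
    hshift.comp t ((hasDerivAt_id t).const_add (-t)).hasDerivWithinAt hmaps

end IsParabolicSol

/-! ### Weak form of the equation in logarithmic variables -/

/-- The integrand of the weak form `d/dt ∫ φ e^y u = ∫ weakIntegrand φ y u` of the equation
`u_t = u_yy + (e^y - 1 + 2 e^{-y} u) u_y + (2 e^y - 2) u`. -/
noncomputable def weakIntegrand (φ : ℝ → ℝ) (y v : ℝ) : ℝ :=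
  exp y * (deriv (deriv φ) y + (3 - exp y) * deriv φ y) * v - deriv φ y * v ^ 2

/-- The Kompaneets equation for `u t y = n (e^y) t`. -/
abbrev IsLogKompSol (u : ℝ → ℝ → ℝ) : Prop :=
  IsParabolicSol (fun y v => exp y - 1 + 2 * exp (-y) * v) (fun y => 2 * exp y - 2) u

lemma continuous_weakIntegrand {φ : ℝ → ℝ} (hφ : ContDiff ℝ 2 φ) :
    Continuous fun p : ℝ × ℝ => weakIntegrand φ p.1 p.2 := by
  have hφ₁ : ContDiff ℝ 1 (deriv φ) := ContDiff.deriv' (n := 1) hφ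
  have := hφ₁.continuous
  have := hφ₁.continuous_deriv_one
  unfold weakIntegrand
  fun_prop

lemma weakIntegrand_eq_zero_of_notMem_tsupport {φ : ℝ → ℝ} {y : ℝ} (hy : y ∉ tsupport φ) (v : ℝ) :
    weakIntegrand φ y v = 0 := by
  have hzero : φ =ᶠ[𝓝 y] fun _ => 0 := notMem_tsupport_iff_eventuallyEq.1 hy
  have hderiv : deriv φ =ᶠ[𝓝 y] fun _ => 0 := by simpa using hzero.deriv
  simp [weakIntegrand, hderiv.eq_of_nhds, hderiv.deriv_eq]

namespace IsLogKompSol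

variable {u : ℝ → ℝ → ℝ} {φ : ℝ → ℝ} {t : ℝ}

lemma hasDerivAt_weakFlux (h : IsLogKompSol u) (hφ : ContDiff ℝ 2 φ) (ht : 0 < t) (y : ℝ) :
    HasDerivAt (fun y => deriv φ y * (exp y * u t y)
        + φ y * ((2 * exp y - exp y ^ 2) * u t y - u t y ^ 2))
      (weakIntegrand φ y (u t y) - (φ y * exp y * lowerOrder
        (fun y v => exp y - 1 + 2 * exp (-y) * v) (fun y => 2 * exp y - 2) (u t) y
        - (deriv φ y * exp y + φ y * exp y) * deriv (u t) y)) y := by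
  have hφ₁ : ContDiff ℝ 1 (deriv φ) := ContDiff.deriv' (n := 1) hφ
  have he := Real.hasDerivAt_exp y
  have hut := (h.differentiable t ht y).hasDerivAt
  refine (((hφ₁.differentiable one_ne_zero y).hasDerivAt.mul (he.mul hut)).add
    ((hφ.differentiable two_ne_zero y).hasDerivAt.mul
      ((((he.const_mul 2).sub (he.pow 2)).mul hut).sub (hut.pow 2)))).congr_deriv ?_
  simp only [weakIntegrand, lowerOrder, Real.exp_neg, Pi.mul_apply, Pi.sub_apply, Pi.pow_apply]
  field_simp
  ring

lemma integral_lowerOrder_sub_eq_integral_weakIntegrand (h : IsLogKompSol u) (hφ : ContDiff ℝ 2 φ)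
    (hs : HasCompactSupport φ) (ht : 0 < t) :
    (∫ y, φ y * exp y * lowerOrder (fun y v => exp y - 1 + 2 * exp (-y) * v)
        (fun y => 2 * exp y - 2) (u t) y) - ∫ y, deriv (fun y => φ y * exp y) y * deriv (u t) y
      = ∫ y, weakIntegrand φ y (u t y) := by
  have hu := h.contDiff_one ht
  have hφ₀ := hφ.of_le one_le_two
  have hφ₁ : ContDiff ℝ 1 (deriv φ) := ContDiff.deriv' (n := 1) hφ
  have hlow := h.continuous_lowerOrder hu
  have hu₀ := hu.continuous
  have hu₁ := hu.continuous_deriv_one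
  have hφc := hφ₀.continuous
  have hderiv : deriv (fun y => φ y * exp y) = fun y => deriv φ y * exp y + φ y * exp y :=
    funext fun y =>
      ((hφ₀.differentiable one_ne_zero y).hasDerivAt.mul (Real.hasDerivAt_exp y)).deriv
  have hleft : Integrable fun y => φ y * exp y *
      lowerOrder (fun y v => exp y - 1 + 2 * exp (-y) * v) (fun y => 2 * exp y - 2) (u t) y :=
    ((hφc.mul continuous_exp).mul hlow).integrable_of_hasCompactSupport hs.mul_right.mul_right
  have hright : Integrable fun y => (deriv φ y * exp y + φ y * exp y) * deriv (u t) y :=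
    (((hφ₁.continuous.mul continuous_exp).add (hφc.mul continuous_exp)).mul
      hu₁).integrable_of_hasCompactSupport (hs.deriv.mul_right.add hs.mul_right).mul_right
  have hweak : Integrable fun y => weakIntegrand φ y (u t y) :=
    ((continuous_weakIntegrand hφ).comp (continuous_id.prodMk hu₀)).integrable_of_hasCompactSupport
      (HasCompactSupport.intro hs fun y hy => weakIntegrand_eq_zero_of_notMem_tsupport hy _)
  have hdiff : Integrable fun y => φ y * exp y * lowerOrder
      (fun y v => exp y - 1 + 2 * exp (-y) * v) (fun y => 2 * exp y - 2) (u t) y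
      - (deriv φ y * exp y + φ y * exp y) * deriv (u t) y := hleft.sub hright
  have hzero := integral_eq_zero_of_hasDerivAt_of_integrable (h.hasDerivAt_weakFlux hφ ht)
    (hweak.sub hdiff)
    (Continuous.integrable_of_hasCompactSupport (by fun_prop) (hs.deriv.mul_right.add hs.mul_right))
  rw [integral_sub hweak hdiff] at hzero
  rw [hderiv, ← integral_sub hleft hright]
  linarith

lemma continuousOn_integral_of_hasCompactSupport (h : IsLogKompSol u) {g : ℝ → ℝ → ℝ}
    (hg : Continuous fun p : ℝ × ℝ => g p.1 p.2) (hs : HasCompactSupport φ)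
    (hzero : ∀ y ∉ tsupport φ, ∀ v, g y v = 0) :
    ContinuousOn (fun t => ∫ y, g y (u t y)) (Ioi 0) :=
  continuousOn_integral_of_compact_support hs
    (hg.comp_continuousOn (continuousOn_snd.prodMk h.continuousOn)) fun _ y _ hy => hzero y hy _

lemma integral_weakIntegrand_of_hasCompactSupport (h : IsLogKompSol u) (hφ : ContDiff ℝ 2 φ)
    (hs : HasCompactSupport φ) {t₁ t₂ : ℝ} (ht₁ : 0 < t₁) (ht : t₁ ≤ t₂) :
    IntervalIntegrable (fun t => ∫ y, weakIntegrand φ y (u t y)) volume t₁ t₂ ∧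
      ∫ t in t₁..t₂, ∫ y, weakIntegrand φ y (u t y)
        = (∫ y, φ y * exp y * u t₂ y) - ∫ y, φ y * exp y * u t₁ y := by
  have hφ₀ := hφ.continuous
  have hsub : Icc t₁ t₂ ⊆ Ioi 0 := fun t ht => ht₁.trans_le ht.1
  have hint : IntervalIntegrable (fun t => ∫ y, weakIntegrand φ y (u t y)) volume t₁ t₂ :=
    ContinuousOn.intervalIntegrable_of_Icc ht <|
      (h.continuousOn_integral_of_hasCompactSupport (continuous_weakIntegrand hφ) hs
        fun y hy => weakIntegrand_eq_zero_of_notMem_tsupport hy).mono hsub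
  refine ⟨hint, intervalIntegral.integral_eq_sub_of_hasDeriv_right_of_le ht
    ((h.continuousOn_integral_of_hasCompactSupport (g := fun y v => φ y * exp y * v)
      (by fun_prop) hs fun y hy v => by
        simp [image_eq_zero_of_notMem_tsupport hy]).mono hsub) (fun t ht' => ?_) hint⟩
  have htpos := ht₁.trans ht'.1
  rw [← h.integral_lowerOrder_sub_eq_integral_weakIntegrand hφ hs htpos]
  exact h.hasDerivWithinAt_integral_mul htpos ((hφ.of_le one_le_two).mul contDiff_exp) hs.mul_right

end IsLogKompSol

/-! ### Removing the cutoff -/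

lemma integrable_exp_neg_abs : Integrable fun y : ℝ => exp (-|y|) := by
  rw [← integrableOn_univ, ← Iic_union_Ioi (a := (0 : ℝ))]
  refine .union ((integrableOn_exp_Iic 0).congr_fun (fun y hy => ?_) measurableSet_Iic)
    ((integrableOn_exp_neg_Ioi 0).congr_fun (fun y hy => ?_) measurableSet_Ioi)
  · simp only [abs_of_nonpos (mem_Iic.1 hy), neg_neg]
  · simp only [abs_of_pos (mem_Ioi.1 hy)]

lemma tendsto_exp_neg_abs_cocompact : Tendsto (fun y : ℝ => exp (-|y|)) (cocompact ℝ) (𝓝 0) :=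
  tendsto_exp_neg_atTop_nhds_zero.comp tendsto_norm_cocompact_atTop

section Dilation

variable {w g : ℝ → ℝ} {B ε : ℝ}

lemma integral_mul_dilate (w g : ℝ → ℝ) (hε : 0 < ε) :
    ∫ y, w y * (ε * g (ε * y)) = ∫ s, w (s * ε⁻¹) * g s := by
  have h := Measure.integral_comp_mul_left (fun s => w (s * ε⁻¹) * (ε * g s)) ε
  simp only [mul_right_comm _ _ ε⁻¹, mul_inv_cancel₀ hε.ne', one_mul, abs_of_pos (inv_pos.2 hε),
    smul_eq_mul, ← integral_const_mul] at h
  exact h.trans (integral_congr_ae (.of_forall fun s => by field_simp))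

lemma abs_integral_mul_dilate_le (hB : ∀ y, |w y| ≤ B) (hg : Integrable g) (hε : 0 < ε) :
    |∫ y, w y * (ε * g (ε * y))| ≤ B * ∫ s, |g s| := by
  rw [integral_mul_dilate w g hε, ← integral_const_mul, ← Real.norm_eq_abs]
  refine norm_integral_le_of_norm_le (hg.abs.const_mul B) (.of_forall fun s => ?_)
  rw [norm_mul]
  exact mul_le_mul_of_nonneg_right (hB _) (norm_nonneg _)

lemma tendsto_integral_mul_dilate (hw : Continuous w) (hB : ∀ y, |w y| ≤ B)
    (hw₀ : Tendsto w (cocompact ℝ) (𝓝 0)) (hg : Integrable g) :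
    Tendsto (fun ε => ∫ y, w y * (ε * g (ε * y))) (𝓝[>] 0) (𝓝 0) := by
  have hlim : Tendsto (fun ε : ℝ => ∫ s, w (s * ε⁻¹) * g s) (𝓝[>] 0) (𝓝 (∫ _ : ℝ, (0 : ℝ))) := by
    refine tendsto_integral_filter_of_dominated_convergence (fun s => B * |g s|)
      (.of_forall fun ε => (hw.comp (continuous_mul_const ε⁻¹)).aestronglyMeasurable.mul hg.1)
      (.of_forall fun ε => .of_forall fun s => ?_) (hg.abs.const_mul B) ?_
    · rw [norm_mul]
      exact mul_le_mul_of_nonneg_right (hB _) (norm_nonneg _)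
    · filter_upwards [compl_mem_ae_iff.2 (volume_singleton (a := (0 : ℝ)))] with s hs
      have hs₀ : Tendsto (fun ε : ℝ => s * ε⁻¹) (𝓝[>] 0) (cocompact ℝ) := by
        rw [← Metric.cobounded_eq_cocompact]
        exact ((tendsto_mul_left_cobounded hs).comp tendsto_inv₀_nhdsNE_zero).mono_left
          (nhdsWithin_mono _ fun ε hε => hε.ne')
      simpa using (hw₀.comp hs₀).mul_const (g s)
  rw [integral_zero] at hlim
  refine hlim.congr' ?_
  filter_upwards [self_mem_nhdsWithin] with ε hε using (integral_mul_dilate w g hε).symm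

end Dilation

/-- A possible value `v y = n (e^y)` of a solution at a fixed time, with the quantitative bounds
`n ≤ M` and `x² n ≤ E` and without photons at `x = 0`. -/
structure IsProfile (M E : ℝ) (v : ℝ → ℝ) : Prop where
  continuous : Continuous v
  nonneg : ∀ y, 0 ≤ v y
  le : ∀ y, v y ≤ M
  decay : ∀ y, exp y ^ 2 * v y ≤ E
  tendsto_atBot : Tendsto v atBot (𝓝 0)
  tendsto_atTop : Tendsto (fun y => exp y ^ 2 * v y) atTop (𝓝 0)

namespace IsProfile

variable {M E : ℝ} {v : ℝ → ℝ}

lemma bound_nonneg (h : IsProfile M E v) : 0 ≤ M := (h.nonneg 0).trans (h.le 0)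

lemma decay_nonneg (h : IsProfile M E v) : 0 ≤ E :=
  (mul_nonneg (sq_nonneg _) (h.nonneg 0)).trans (h.decay 0)

lemma exp_mul_nonneg (h : IsProfile M E v) (y : ℝ) : 0 ≤ exp y * v y :=
  mul_nonneg (exp_pos y).le (h.nonneg y)

lemma exp_mul_le (h : IsProfile M E v) (y : ℝ) : exp y * v y ≤ (M + E) * exp (-|y|) := by
  rcases le_total y 0 with hy | hy
  · rw [abs_of_nonpos hy, neg_neg, mul_comm]
    have := h.le y
    have := h.decay_nonneg
    gcongr
    linarith
  · rw [abs_of_nonneg hy, exp_neg, ← div_eq_mul_inv, le_div_iff₀ (exp_pos y)]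
    have := h.decay y
    have := h.bound_nonneg
    linarith

lemma integrable_of_le_exp_mul (h : IsProfile M E v) {f : ℝ → ℝ} (hf : AEStronglyMeasurable f)
    {K : ℝ} (hK : 0 ≤ K) (hle : ∀ y, |f y| ≤ K * (exp y * v y)) : Integrable f :=
  ((integrable_exp_neg_abs.const_mul (M + E)).const_mul K).mono' hf
    (.of_forall fun y => (hle y).trans (mul_le_mul_of_nonneg_left (h.exp_mul_le y) hK))

lemma integrable_exp_mul (h : IsProfile M E v) : Integrable fun y => exp y * v y :=
  h.integrable_of_le_exp_mul (continuous_exp.mul h.continuous).aestronglyMeasurable zero_le_one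
    fun y => by rw [abs_of_nonneg (h.exp_mul_nonneg y), one_mul]

lemma tendsto_exp_mul (h : IsProfile M E v) :
    Tendsto (fun y => exp y * v y) (cocompact ℝ) (𝓝 0) :=
  squeeze_zero h.exp_mul_nonneg h.exp_mul_le
    (by simpa using tendsto_exp_neg_abs_cocompact.const_mul (M + E))

lemma tendsto_cocompact (h : IsProfile M E v) : Tendsto v (cocompact ℝ) (𝓝 0) := by
  rw [cocompact_eq_atBot_atTop]
  refine h.tendsto_atBot.sup (squeeze_zero' (.of_forall h.nonneg) ?_ h.tendsto_atTop)
  filter_upwards [eventually_ge_atTop 0] with y hy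
  exact le_mul_of_one_le_left (h.nonneg y) (one_le_pow₀ (one_le_exp hy))

lemma tendsto_exp_sq_mul (h : IsProfile M E v) :
    Tendsto (fun y => exp y ^ 2 * v y) (cocompact ℝ) (𝓝 0) := by
  rw [cocompact_eq_atBot_atTop]
  refine Tendsto.sup ?_ h.tendsto_atTop
  simpa using (tendsto_exp_atBot.pow 2).mul h.tendsto_atBot

end IsProfile

/-- Test functions for the weak form on the whole line: bounded `C²` functions which are constant
near `-∞` and satisfy `φ' = O(e^{-y})` at `+∞`. -/
structure IsTestFunction (φ : ℝ → ℝ) : Prop where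
  contDiff : ContDiff ℝ 2 φ
  exists_bound : ∃ C, ∀ y, |φ y| ≤ C ∧ |exp y * deriv φ y| ≤ C ∧ |deriv (deriv φ) y| ≤ C
  eventually_deriv_eq_zero : ∀ᶠ y in atBot, deriv φ y = 0

lemma isTestFunction_const (c : ℝ) : IsTestFunction fun _ => c where
  contDiff := contDiff_const
  exists_bound := ⟨|c|, fun y => by simp⟩
  eventually_deriv_eq_zero := by simp

namespace IsTestFunction

variable {φ : ℝ → ℝ} {M E : ℝ} {v : ℝ → ℝ}

lemma contDiff_deriv (h : IsTestFunction φ) : ContDiff ℝ 1 (deriv φ) :=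
  ContDiff.deriv' (n := 1) h.contDiff

lemma continuous (h : IsTestFunction φ) : Continuous φ := h.contDiff.continuous

lemma continuous_deriv (h : IsTestFunction φ) : Continuous (deriv φ) := h.contDiff_deriv.continuous

lemma exists_abs_deriv_le (h : IsTestFunction φ) :
    ∃ A, 0 ≤ A ∧ ∀ y, |deriv φ y| ≤ A ∧ |deriv φ y| ≤ A * exp y := by
  obtain ⟨C, hC⟩ := h.exists_bound
  obtain ⟨L, hL⟩ := eventually_atBot.1 h.eventually_deriv_eq_zero
  have hC₀ : 0 ≤ C := (abs_nonneg _).trans (hC 0).1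
  refine ⟨C * exp |L| ^ 2, by positivity, fun y => ?_⟩
  rcases le_total y L with hy | hy
  · rw [hL y hy, abs_zero]
    constructor <;> positivity
  have hφ : exp y * |deriv φ y| ≤ C := by simpa [abs_mul] using (hC y).2.1
  have hexp : 1 ≤ exp y * exp |L| := by
    rw [← exp_add]
    exact one_le_exp (by linarith [neg_abs_le L])
  have hderiv : |deriv φ y| ≤ C * exp |L| :=
    calc |deriv φ y| ≤ |deriv φ y| * (exp y * exp |L|) :=
          le_mul_of_one_le_right (abs_nonneg _) hexp
      _ = exp y * |deriv φ y| * exp |L| := by ring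
      _ ≤ C * exp |L| := by gcongr
  constructor
  · calc |deriv φ y| ≤ C * exp |L| := hderiv
      _ ≤ C * exp |L| * exp |L| :=
          le_mul_of_one_le_right (by positivity) (one_le_exp (abs_nonneg L))
      _ = C * exp |L| ^ 2 := by ring
  · calc |deriv φ y| ≤ C * exp |L| := hderiv
      _ ≤ C * exp |L| * (exp y * exp |L|) := le_mul_of_one_le_right (by positivity) hexp
      _ = C * exp |L| ^ 2 * exp y := by ring

lemma exists_abs_weakIntegrand_le (h : IsTestFunction φ) (hM : 0 ≤ M) :
    ∃ K, 0 ≤ K ∧ ∀ y v, 0 ≤ v → v ≤ M → |weakIntegrand φ y v| ≤ K * (exp y * v) := by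
  obtain ⟨C, hC⟩ := h.exists_bound
  obtain ⟨A, hA, hφ⟩ := h.exists_abs_deriv_le
  have hC₀ : 0 ≤ C := (abs_nonneg _).trans (hC 0).1
  refine ⟨C + 3 * A + C + A * M, by positivity, fun y v hv hvM => ?_⟩
  have hlin : |deriv (deriv φ) y + 3 * deriv φ y - exp y * deriv φ y| ≤ C + 3 * A + C := by
    calc |deriv (deriv φ) y + 3 * deriv φ y - exp y * deriv φ y|
        ≤ |deriv (deriv φ) y| + |3 * deriv φ y| + |exp y * deriv φ y| :=
          (abs_sub _ _).trans (add_le_add_left (abs_add_le _ _) _)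
      _ ≤ C + 3 * A + C := by
          rw [abs_mul 3, abs_of_pos (three_pos : (0 : ℝ) < 3)]
          gcongr
          exacts [(hC y).2.2, (hφ y).1, (hC y).2.1]
  calc |weakIntegrand φ y v|
      = |(deriv (deriv φ) y + 3 * deriv φ y - exp y * deriv φ y) * (exp y * v)
          - deriv φ y * v ^ 2| := by rw [weakIntegrand]; ring_nf
    _ ≤ |deriv (deriv φ) y + 3 * deriv φ y - exp y * deriv φ y| * (exp y * v)
          + |deriv φ y| * v ^ 2 := by
        refine (abs_sub _ _).trans_eq ?_
        rw [abs_mul _ (exp y * v), abs_mul (deriv φ y),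
          abs_of_nonneg (by positivity : 0 ≤ exp y * v), abs_sq]
    _ ≤ (C + 3 * A + C) * (exp y * v) + A * exp y * (M * v) := by
        rw [sq]
        gcongr
        exact (hφ y).2
    _ = (C + 3 * A + C + A * M) * (exp y * v) := by ring

lemma integrable_mul (h : IsTestFunction φ) (hv : IsProfile M E v) :
    Integrable fun y => φ y * exp y * v y := by
  obtain ⟨C, hC⟩ := h.exists_bound
  refine hv.integrable_of_le_exp_mul
    ((h.continuous.mul continuous_exp).mul hv.continuous).aestronglyMeasurable
    ((abs_nonneg _).trans (hC 0).1) fun y => ?_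
  rw [mul_assoc, abs_mul, abs_of_nonneg (hv.exp_mul_nonneg y)]
  exact mul_le_mul_of_nonneg_right (hC y).1 (hv.exp_mul_nonneg y)

lemma integrable_weakIntegrand (h : IsTestFunction φ) (hv : IsProfile M E v) :
    Integrable fun y => weakIntegrand φ y (v y) := by
  obtain ⟨K, hK, hle⟩ := h.exists_abs_weakIntegrand_le hv.bound_nonneg
  exact hv.integrable_of_le_exp_mul ((continuous_weakIntegrand h.contDiff).comp
    (continuous_id.prodMk hv.continuous)).aestronglyMeasurable hK
    fun y => hle y _ (hv.nonneg y) (hv.le y)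

end IsTestFunction

/-- The factor of `κ'` when a test function `φ` in `weakIntegrand` is replaced by `φ κ`. -/
noncomputable def cutoffFlux (φ v : ℝ → ℝ) (y : ℝ) : ℝ :=
  2 * deriv φ y * (exp y * v y) + φ y * (3 * (exp y * v y) - exp y ^ 2 * v y - v y ^ 2)

namespace IsTestFunction

variable {φ χ : ℝ → ℝ} {M E : ℝ} {v : ℝ → ℝ}

lemma deriv_mul_dilate (h : IsTestFunction φ) (hχ : ContDiff ℝ 2 χ) (ε : ℝ) :
    deriv (fun y => φ y * χ (ε * y)) =
      fun y => deriv φ y * χ (ε * y) + φ y * (ε * deriv χ (ε * y)) := by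
  funext y
  have hdil : HasDerivAt (fun y : ℝ => ε * y) ε y := by simpa using (hasDerivAt_id y).const_mul ε
  refine ((h.contDiff.differentiable two_ne_zero y).hasDerivAt.mul
    ((hχ.differentiable two_ne_zero (ε * y)).hasDerivAt.comp y hdil)).deriv.trans ?_
  simp only [Function.comp_apply]
  ring

lemma deriv_deriv_mul_dilate (h : IsTestFunction φ) (hχ : ContDiff ℝ 2 χ) (ε y : ℝ) :
    deriv (deriv fun y => φ y * χ (ε * y)) y =
      deriv (deriv φ) y * χ (ε * y) + 2 * deriv φ y * (ε * deriv χ (ε * y))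
        + ε * (φ y * (ε * deriv (deriv χ) (ε * y))) := by
  have hχ₁ : ContDiff ℝ 1 (deriv χ) := ContDiff.deriv' (n := 1) hχ
  have hdil : HasDerivAt (fun y : ℝ => ε * y) ε y := by simpa using (hasDerivAt_id y).const_mul ε
  rw [h.deriv_mul_dilate hχ]
  refine (((h.contDiff_deriv.differentiable one_ne_zero y).hasDerivAt.mul
    ((hχ.differentiable two_ne_zero (ε * y)).hasDerivAt.comp y hdil)).add
    ((h.contDiff.differentiable two_ne_zero y).hasDerivAt.mul
    (((hχ₁.differentiable one_ne_zero (ε * y)).hasDerivAt.comp y hdil).const_mul ε))).deriv.trans ?_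
  simp only [Function.comp_apply]
  ring

lemma weakIntegrand_mul_dilate (h : IsTestFunction φ) (hχ : ContDiff ℝ 2 χ) (ε y : ℝ) :
    weakIntegrand (fun y => φ y * χ (ε * y)) y (v y) =
      χ (ε * y) * weakIntegrand φ y (v y) + cutoffFlux φ v y * (ε * deriv χ (ε * y))
        + ε * (φ y * exp y * v y * (ε * deriv (deriv χ) (ε * y))) := by
  simp only [weakIntegrand, cutoffFlux, h.deriv_deriv_mul_dilate hχ]
  rw [h.deriv_mul_dilate hχ]
  ring

lemma continuous_cutoffFlux (h : IsTestFunction φ) (hv : IsProfile M E v) :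
    Continuous (cutoffFlux φ v) := by
  have := h.continuous
  have := h.continuous_deriv
  have := hv.continuous
  unfold cutoffFlux
  fun_prop

lemma exists_abs_cutoffFlux_le (h : IsTestFunction φ) :
    ∃ K, 0 ≤ K ∧ ∀ {M E : ℝ} {v : ℝ → ℝ}, IsProfile M E v → ∀ y,
      |φ y * exp y * v y| ≤ K * (exp y * v y) ∧
      |cutoffFlux φ v y| ≤ K * (exp y * v y + exp y ^ 2 * v y + v y ^ 2) := by
  obtain ⟨C, hC⟩ := h.exists_bound
  obtain ⟨A, hA, hφ⟩ := h.exists_abs_deriv_le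
  have hC₀ : 0 ≤ C := (abs_nonneg _).trans (hC 0).1
  refine ⟨2 * A + 3 * C, by positivity, fun {M E v} hv y => ⟨?_, ?_⟩⟩
  · rw [mul_assoc, abs_mul, abs_of_nonneg (hv.exp_mul_nonneg y)]
    exact mul_le_mul_of_nonneg_right ((hC y).1.trans (by linarith)) (hv.exp_mul_nonneg y)
  have hv₀ := hv.nonneg y
  have hexp := hv.exp_mul_nonneg y
  have hbracket : |3 * (exp y * v y) - exp y ^ 2 * v y - v y ^ 2|
      ≤ 3 * (exp y * v y + exp y ^ 2 * v y + v y ^ 2) := by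
    have : 0 ≤ exp y ^ 2 * v y := by positivity
    rw [abs_le]
    constructor <;> nlinarith [sq_nonneg (v y)]
  calc |cutoffFlux φ v y|
      ≤ 2 * |deriv φ y| * (exp y * v y)
          + |φ y| * |3 * (exp y * v y) - exp y ^ 2 * v y - v y ^ 2| := by
        refine (abs_add_le _ _).trans_eq ?_
        rw [abs_mul, abs_mul 2, abs_two, abs_of_nonneg hexp, abs_mul (φ y)]
    _ ≤ 2 * A * (exp y * v y + exp y ^ 2 * v y + v y ^ 2)
          + C * (3 * (exp y * v y + exp y ^ 2 * v y + v y ^ 2)) := by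
        gcongr
        · exact (hφ y).1
        · have : 0 ≤ exp y ^ 2 * v y := by positivity
          nlinarith [sq_nonneg (v y)]
        · exact (hC y).1
    _ = (2 * A + 3 * C) * (exp y * v y + exp y ^ 2 * v y + v y ^ 2) := by ring

lemma exists_cutoffFlux_le (h : IsTestFunction φ) (M E : ℝ) :
    ∃ B, ∀ v, IsProfile M E v → ∀ y,
      |φ y * exp y * v y| ≤ B ∧ |cutoffFlux φ v y| ≤ B := by
  obtain ⟨K, hK, hle⟩ := h.exists_abs_cutoffFlux_le
  refine ⟨K * (M + E + E + M ^ 2), fun v hv y => ?_⟩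
  have hM := hv.bound_nonneg
  have hE := hv.decay_nonneg
  have hexp : exp y * v y ≤ M + E := (hv.exp_mul_le y).trans
    (mul_le_of_le_one_right (by positivity) (exp_le_one_iff.2 (by simp)))
  refine ⟨(hle hv y).1.trans ?_, (hle hv y).2.trans ?_⟩
  · gcongr
    nlinarith
  · have := hv.nonneg y
    have := hv.le y
    have := hv.decay y
    gcongr

lemma tendsto_cutoffFlux (h : IsTestFunction φ) (hv : IsProfile M E v) :
    Tendsto (cutoffFlux φ v) (cocompact ℝ) (𝓝 0) ∧
      Tendsto (fun y => φ y * exp y * v y) (cocompact ℝ) (𝓝 0) := by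
  obtain ⟨K, -, hle⟩ := h.exists_abs_cutoffFlux_le
  constructor
  · refine squeeze_zero_norm (fun y => (hle hv y).2) ?_
    simpa using (((hv.tendsto_exp_mul.add hv.tendsto_exp_sq_mul).add
      (hv.tendsto_cocompact.pow 2)).const_mul K)
  · exact squeeze_zero_norm (fun y => (hle hv y).1)
      (by simpa using hv.tendsto_exp_mul.const_mul K)

end IsTestFunction

/-- A cutoff `χ`; its dilates `χ (ε y)` tend to `1` as `ε → 0`. -/
structure IsCutoff (χ : ℝ → ℝ) : Prop where
  contDiff : ContDiff ℝ 2 χ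
  hasCompactSupport : HasCompactSupport χ
  abs_le_one : ∀ y, |χ y| ≤ 1
  map_zero : χ 0 = 1

lemma exists_isCutoff : ∃ χ, IsCutoff χ := by
  let χ : ContDiffBump (0 : ℝ) := ⟨1, 2, one_pos, one_lt_two⟩
  exact ⟨χ, χ.contDiff, χ.hasCompactSupport,
    fun y => (abs_of_nonneg χ.nonneg).trans_le χ.le_one,
    χ.one_of_mem_closedBall (Metric.mem_closedBall_self zero_le_one)⟩

namespace IsCutoff

variable {φ χ : ℝ → ℝ} {M E ε : ℝ} {v : ℝ → ℝ}

lemma integrable_deriv (hχ : IsCutoff χ) : Integrable (deriv χ) :=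
  (hχ.contDiff.continuous_deriv one_le_two).integrable_of_hasCompactSupport
    hχ.hasCompactSupport.deriv

lemma integrable_deriv_deriv (hχ : IsCutoff χ) : Integrable (deriv (deriv χ)) := by
  have hχ₁ : ContDiff ℝ 1 (deriv χ) := ContDiff.deriv' (n := 1) hχ.contDiff
  exact hχ₁.continuous_deriv_one.integrable_of_hasCompactSupport hχ.hasCompactSupport.deriv.deriv

lemma integral_weakIntegrand_mul_dilate (hχ : IsCutoff χ) (h : IsTestFunction φ)
    (hv : IsProfile M E v) (hε : 0 < ε) :
    ∫ y, weakIntegrand (fun y => φ y * χ (ε * y)) y (v y) =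
      (∫ y, χ (ε * y) * weakIntegrand φ y (v y))
        + (∫ y, cutoffFlux φ v y * (ε * deriv χ (ε * y)))
        + ε * ∫ y, φ y * exp y * v y * (ε * deriv (deriv χ) (ε * y)) := by
  obtain ⟨B, hB⟩ := h.exists_cutoffFlux_le M E
  have hφ := h.continuous
  have hv₀ := hv.continuous
  have h₀ : Integrable fun y => χ (ε * y) * weakIntegrand φ y (v y) :=
    (h.integrable_weakIntegrand hv).bdd_mul
      (hχ.contDiff.continuous.comp (continuous_const_mul ε)).aestronglyMeasurable
      (.of_forall fun y => hχ.abs_le_one _)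
  have h₁ : Integrable fun y => cutoffFlux φ v y * (ε * deriv χ (ε * y)) :=
    ((hχ.integrable_deriv.comp_mul_left' hε.ne').const_mul ε).bdd_mul
      (h.continuous_cutoffFlux hv).aestronglyMeasurable (.of_forall fun y => (hB v hv y).2)
  have h₂ : Integrable fun y => φ y * exp y * v y * (ε * deriv (deriv χ) (ε * y)) :=
    ((hχ.integrable_deriv_deriv.comp_mul_left' hε.ne').const_mul ε).bdd_mul
      (by fun_prop) (.of_forall fun y => (hB v hv y).1)
  have h₀₁ : Integrable fun y => χ (ε * y) * weakIntegrand φ y (v y)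
      + cutoffFlux φ v y * (ε * deriv χ (ε * y)) := h₀.add h₁
  simp only [h.weakIntegrand_mul_dilate hχ.contDiff]
  rw [integral_add h₀₁ (h₂.const_mul ε), integral_add h₀ h₁, integral_const_mul]

lemma exists_abs_integral_weakIntegrand_mul_dilate_le (hχ : IsCutoff χ) (h : IsTestFunction φ)
    (hM : 0 ≤ M) (E : ℝ) :
    ∃ B, ∀ v, IsProfile M E v → ∀ ε, 0 < ε → ε ≤ 1 →
      |∫ y, weakIntegrand (fun y => φ y * χ (ε * y)) y (v y)| ≤ B := by
  obtain ⟨B, hB⟩ := h.exists_cutoffFlux_le M E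
  obtain ⟨K, hK, hle⟩ := h.exists_abs_weakIntegrand_le hM
  refine ⟨K * ((M + E) * ∫ y, exp (-|y|)) + B * (∫ s, |deriv χ s|) + B * ∫ s, |deriv (deriv χ) s|,
    fun v hv ε hε hε₁ => ?_⟩
  have h₀ : |∫ y, χ (ε * y) * weakIntegrand φ y (v y)| ≤ K * ((M + E) * ∫ y, exp (-|y|)) := by
    rw [← integral_const_mul, ← integral_const_mul, ← Real.norm_eq_abs]
    refine norm_integral_le_of_norm_le ((integrable_exp_neg_abs.const_mul _).const_mul K)
      (.of_forall fun y => ?_)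
    rw [norm_mul]
    calc ‖χ (ε * y)‖ * ‖weakIntegrand φ y (v y)‖ ≤ 1 * (K * (exp y * v y)) := by
          gcongr
          exacts [hχ.abs_le_one _, hle y _ (hv.nonneg y) (hv.le y)]
      _ ≤ K * ((M + E) * exp (-|y|)) := by
          rw [one_mul]
          exact mul_le_mul_of_nonneg_left (hv.exp_mul_le y) hK
  have h₁ := abs_integral_mul_dilate_le (fun y => (hB v hv y).2) hχ.integrable_deriv hε
  have h₂ : |ε * ∫ y, φ y * exp y * v y * (ε * deriv (deriv χ) (ε * y))|
      ≤ B * ∫ s, |deriv (deriv χ) s| := by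
    rw [abs_mul, abs_of_pos hε]
    exact (mul_le_of_le_one_left (abs_nonneg _) hε₁).trans
      (abs_integral_mul_dilate_le (fun y => (hB v hv y).1) hχ.integrable_deriv_deriv hε)
  rw [hχ.integral_weakIntegrand_mul_dilate h hv hε]
  exact (abs_add_three _ _ _).trans (by gcongr)

lemma tendsto_integral_dilate_mul (hχ : IsCutoff χ) {f : ℝ → ℝ} (hf : Integrable f) :
    Tendsto (fun ε => ∫ y, χ (ε * y) * f y) (𝓝[>] 0) (𝓝 (∫ y, f y)) := by
  refine tendsto_integral_filter_of_dominated_convergence (fun y => |f y|)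
    (.of_forall fun ε => (hχ.contDiff.continuous.comp
      (continuous_const_mul ε)).aestronglyMeasurable.mul hf.1)
    (.of_forall fun ε => .of_forall fun y => ?_) hf.abs (.of_forall fun y => ?_)
  · rw [norm_mul]
    exact mul_le_of_le_one_left (norm_nonneg _) (hχ.abs_le_one _)
  · have hdil : Tendsto (fun ε => χ (ε * y)) (𝓝 0) (𝓝 (χ (0 * y))) :=
      (hχ.contDiff.continuous.comp (continuous_mul_const y)).tendsto 0
    rw [zero_mul, hχ.map_zero] at hdil
    simpa using (hdil.mono_left nhdsWithin_le_nhds).mul_const (f y)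

lemma tendsto_integral_weakIntegrand_mul_dilate (hχ : IsCutoff χ) (h : IsTestFunction φ)
    (hv : IsProfile M E v) :
    Tendsto (fun ε => ∫ y, weakIntegrand (fun y => φ y * χ (ε * y)) y (v y)) (𝓝[>] 0)
      (𝓝 (∫ y, weakIntegrand φ y (v y))) := by
  obtain ⟨B, hB⟩ := h.exists_cutoffFlux_le M E
  have h₁ := tendsto_integral_mul_dilate (h.continuous_cutoffFlux hv) (fun y => (hB v hv y).2)
    (h.tendsto_cutoffFlux hv).1 hχ.integrable_deriv
  have h₂ := tendsto_integral_mul_dilate ((h.continuous.mul continuous_exp).mul hv.continuous)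
    (fun y => (hB v hv y).1) (h.tendsto_cutoffFlux hv).2 hχ.integrable_deriv_deriv
  have hsum := ((hχ.tendsto_integral_dilate_mul (h.integrable_weakIntegrand hv)).add h₁).add
    ((tendsto_nhdsWithin_of_tendsto_nhds tendsto_id).mul h₂)
  simp only [add_zero, mul_zero] at hsum
  refine hsum.congr' ?_
  filter_upwards [self_mem_nhdsWithin] with ε hε
  exact (hχ.integral_weakIntegrand_mul_dilate h hv hε).symm

end IsCutoff

/-! ### Solutions without photon loss -/

/-- A solution `u t y = n (e^y) t` bounded by `M` for which `n (0, t) = 0` at all positive times. -/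
structure IsLosslessLogSol (M : ℝ) (u : ℝ → ℝ → ℝ) : Prop where
  isLogKompSol : IsLogKompSol u
  exists_isProfile : ∀ T, ∃ E, ∀ t, 0 < t → t < T → IsProfile M E (u t)

namespace IsLosslessLogSol

variable {M : ℝ} {u : ℝ → ℝ → ℝ} {φ : ℝ → ℝ} {t t₁ t₂ : ℝ}

lemma isProfile (h : IsLosslessLogSol M u) (ht : 0 < t) : ∃ E, IsProfile M E (u t) :=
  (h.exists_isProfile (t + 1)).imp fun _ hE => hE t ht (lt_add_one t)

lemma bound_nonneg (h : IsLosslessLogSol M u) : 0 ≤ M :=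
  (h.isProfile one_pos).elim fun _ hE => hE.bound_nonneg

lemma continuousAt_integral (h : IsLosslessLogSol M u) {g : ℝ → ℝ → ℝ}
    (hg : Continuous fun p : ℝ × ℝ => g p.1 p.2) {K : ℝ} (hK : 0 ≤ K)
    (hle : ∀ y v, 0 ≤ v → v ≤ M → |g y v| ≤ K * (exp y * v)) (ht : 0 < t) :
    ContinuousAt (fun t => ∫ y, g y (u t y)) t := by
  obtain ⟨E, hE⟩ := h.exists_isProfile (t + 1)
  have hprofile : ∀ᶠ s in 𝓝 t, IsProfile M E (u s) := by
    filter_upwards [Ioo_mem_nhds ht (lt_add_one t)] with s hs using hE s hs.1 hs.2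
  refine continuousAt_of_dominated (bound := fun y => K * ((M + E) * exp (-|y|))) ?_ ?_
    ((integrable_exp_neg_abs.const_mul _).const_mul K) (.of_forall fun y => ?_)
  · filter_upwards [hprofile] with s hs
    exact (hg.comp (continuous_id.prodMk hs.continuous)).aestronglyMeasurable
  · filter_upwards [hprofile] with s hs
    exact .of_forall fun y => (hle y _ (hs.nonneg y) (hs.le y)).trans
      (mul_le_mul_of_nonneg_left (hs.exp_mul_le y) hK)
  · have hpair : ContinuousAt (fun s => (y, u s y)) t :=
      continuousAt_const.prodMk (h.isLogKompSol.hasDerivAt_time t ht y).continuousAt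
    exact ContinuousAt.comp (x := t) (f := fun s => (y, u s y)) hg.continuousAt hpair

lemma continuousAt_integral_weakIntegrand (h : IsLosslessLogSol M u) (hφ : IsTestFunction φ)
    (ht : 0 < t) : ContinuousAt (fun t => ∫ y, weakIntegrand φ y (u t y)) t := by
  obtain ⟨K, hK, hle⟩ := hφ.exists_abs_weakIntegrand_le h.bound_nonneg
  exact h.continuousAt_integral (continuous_weakIntegrand hφ.contDiff) hK hle ht

/-- No boundary term appears at `y = -∞` because `u t` vanishes there. -/
lemma integral_weakIntegrand (h : IsLosslessLogSol M u) (hφ : IsTestFunction φ) (ht₁ : 0 < t₁)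
    (ht : t₁ ≤ t₂) :
    ∫ t in t₁..t₂, ∫ y, weakIntegrand φ y (u t y)
      = (∫ y, φ y * exp y * u t₂ y) - ∫ y, φ y * exp y * u t₁ y := by
  obtain ⟨χ, hχ⟩ := exists_isCutoff
  obtain ⟨E, hE⟩ := h.exists_isProfile (t₂ + 1)
  have hE' : ∀ t ∈ Icc t₁ t₂, IsProfile M E (u t) := fun t ht' =>
    hE t (ht₁.trans_le ht'.1) (ht'.2.trans_lt (lt_add_one t₂))
  obtain ⟨B, hB⟩ := hχ.exists_abs_integral_weakIntegrand_mul_dilate_le hφ h.bound_nonneg E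
  have hcut : ∀ ε : ℝ, 0 < ε → _ := fun ε hε =>
    h.isLogKompSol.integral_weakIntegrand_of_hasCompactSupport
      (φ := fun y => φ y * χ (ε * y))
      (hφ.contDiff.mul (hχ.contDiff.comp (contDiff_const.mul contDiff_id)))
      ((hχ.hasCompactSupport.comp_homeomorph (Homeomorph.mulLeft₀ ε hε.ne')).mul_left) ht₁ ht
  have hsub : uIoc t₁ t₂ ⊆ Icc t₁ t₂ := (uIoc_of_le ht).trans_subset Ioc_subset_Icc_self
  have hleft : Tendsto (fun ε => ∫ t in t₁..t₂, ∫ y, weakIntegrand (fun y => φ y * χ (ε * y)) y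
      (u t y)) (𝓝[>] 0) (𝓝 (∫ t in t₁..t₂, ∫ y, weakIntegrand φ y (u t y))) := by
    refine intervalIntegral.tendsto_integral_filter_of_dominated_convergence (fun _ => B) ?_ ?_
      intervalIntegrable_const (.of_forall fun t ht' =>
        hχ.tendsto_integral_weakIntegrand_mul_dilate hφ (hE' t (hsub ht')))
    · filter_upwards [self_mem_nhdsWithin] with ε hε
      exact uIoc_of_le ht ▸ (hcut ε hε).1.1.aestronglyMeasurable
    · filter_upwards [Ioc_mem_nhdsGT one_pos] with ε hε
      exact .of_forall fun t ht' => hB _ (hE' t (hsub ht')) ε hε.1 hε.2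
  have hright : ∀ t ∈ Icc t₁ t₂, Tendsto (fun ε => ∫ y, φ y * χ (ε * y) * exp y * u t y) (𝓝[>] 0)
      (𝓝 (∫ y, φ y * exp y * u t y)) := fun t ht' =>
    (hχ.tendsto_integral_dilate_mul (hφ.integrable_mul (hE' t ht'))).congr fun ε =>
      integral_congr_ae (.of_forall fun y => by ring)
  refine tendsto_nhds_unique hleft
    (((hright t₂ (right_mem_Icc.2 ht)).sub (hright t₁ (left_mem_Icc.2 ht))).congr' ?_)
  filter_upwards [self_mem_nhdsWithin] with ε hε using (hcut ε hε).2.symm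

lemma integral_exp_mul_eq (h : IsLosslessLogSol M u) (ht₁ : 0 < t₁) (ht : t₁ ≤ t₂) :
    ∫ y, exp y * u t₂ y = ∫ y, exp y * u t₁ y := by
  have hweak := h.integral_weakIntegrand (isTestFunction_const 1) ht₁ ht
  simp only [weakIntegrand, deriv_const', mul_zero, add_zero, zero_mul, sub_zero, integral_zero,
    intervalIntegral.integral_zero, one_mul] at hweak
  exact sub_eq_zero.1 hweak.symm

lemma hasDerivAt_integral_mul (h : IsLosslessLogSol M u) (hφ : IsTestFunction φ) (ht : 0 < t) :
    HasDerivAt (fun s => ∫ y, φ y * exp y * u s y) (∫ y, weakIntegrand φ y (u t y)) t := by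
  have hcont : ContinuousOn (fun t => ∫ y, weakIntegrand φ y (u t y)) (Ioi 0) := fun s hs =>
    (h.continuousAt_integral_weakIntegrand hφ hs).continuousWithinAt
  have ht₂ : t / 2 < t := half_lt_self ht
  have hint : HasDerivAt (fun s => ∫ t in (t / 2)..s, ∫ y, weakIntegrand φ y (u t y))
      (∫ y, weakIntegrand φ y (u t y)) t :=
    intervalIntegral.integral_hasDerivAt_right
      ((hcont.mono fun s hs => (half_pos ht).trans_le hs.1).intervalIntegrable_of_Icc ht₂.le)
      (hcont.stronglyMeasurableAtFilter isOpen_Ioi t ht)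
      (h.continuousAt_integral_weakIntegrand hφ ht)
  refine (hint.add_const (∫ y, φ y * exp y * u (t / 2) y)).congr_of_eventuallyEq ?_
  filter_upwards [eventually_ge_nhds ht₂] with s hs
  rw [h.integral_weakIntegrand hφ (half_pos ht) hs, sub_add_cancel]

end IsLosslessLogSol

/-! ### The Planck equilibrium -/

/-- The Bose–Einstein equilibrium without chemical potential, in the variable `y = log x`. -/
noncomputable def planck (y : ℝ) : ℝ := nhat 0 (exp y)

lemma planck_eq (y : ℝ) : planck y = exp y ^ 2 / (exp (exp y) - 1) := by
  rw [planck, nhat, add_zero]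

lemma exp_exp_sub_one_pos (y : ℝ) : 0 < exp (exp y) - 1 := sub_pos.2 (one_lt_exp_iff.2 (exp_pos y))

lemma planck_pos (y : ℝ) : 0 < planck y := by
  have := exp_exp_sub_one_pos y
  rw [planck_eq]
  positivity

lemma planck_le_exp (y : ℝ) : planck y ≤ exp y := by
  rw [planck_eq, div_le_iff₀ (exp_exp_sub_one_pos y), sq]
  exact mul_le_mul_of_nonneg_left (le_sub_iff_add_le.2 (add_one_le_exp _)) (exp_pos y).le

lemma pow_succ_le_factorial_mul_exp_sub_one {x : ℝ} (hx : 0 ≤ x) (k : ℕ) :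
    x ^ (k + 1) ≤ (k + 1).factorial * (exp x - 1) := by
  have hfact : (0 : ℝ) < (k + 1).factorial := by positivity
  rw [mul_comm, ← div_le_iff₀ hfact, le_sub_iff_add_le]
  refine le_trans ?_ (sum_le_exp_of_nonneg hx (k + 2))
  rw [Finset.sum_range_succ, Finset.sum_range_succ', add_comm]
  have : 0 ≤ ∑ i ∈ Finset.range k, x ^ (i + 1) / ((i + 1).factorial : ℝ) :=
    Finset.sum_nonneg fun i _ => by positivity
  simp only [pow_zero, Nat.factorial_zero, Nat.cast_one, div_one]
  linarith

lemma exp_pow_mul_planck_le (k : ℕ) (y : ℝ) : exp y ^ k * planck y ≤ (k + 2).factorial := by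
  rw [planck_eq, ← mul_div_assoc, div_le_iff₀ (exp_exp_sub_one_pos y), ← pow_add]
  exact pow_succ_le_factorial_mul_exp_sub_one (exp_pos y).le (k + 1)

lemma hasDerivAt_planck (y : ℝ) :
    HasDerivAt planck (planck y * (2 - exp y - exp (-y) * planck y)) y := by
  have hpos := exp_exp_sub_one_pos y
  have he := Real.hasDerivAt_exp y
  refine (((he.pow 2).div (he.exp.sub_const 1) hpos.ne').congr_of_eventuallyEq
    (.of_forall planck_eq)).congr_deriv ?_
  simp only [planck_eq, exp_neg, Pi.pow_apply]
  field_simp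
  ring

lemma continuous_planck : Continuous planck :=
  continuous_iff_continuousAt.2 fun y => (hasDerivAt_planck y).continuousAt

lemma isProfile_planck : IsProfile 2 24 planck where
  continuous := continuous_planck
  nonneg y := (planck_pos y).le
  le y := by simpa using exp_pow_mul_planck_le 0 y
  decay y := by simpa [Nat.factorial] using exp_pow_mul_planck_le 2 y
  tendsto_atBot := squeeze_zero (fun y => (planck_pos y).le) planck_le_exp tendsto_exp_atBot
  tendsto_atTop := by
    refine squeeze_zero (g := fun y => 120 * exp (-y)) (fun y => ?_) (fun y => ?_) ?_
    · have := planck_pos y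
      positivity
    · rw [exp_neg, ← div_eq_mul_inv, le_div_iff₀ (exp_pos y), mul_right_comm, ← pow_succ]
      simpa [Nat.factorial] using exp_pow_mul_planck_le 3 y
    · simpa using tendsto_exp_neg_atTop_nhds_zero.const_mul 120

lemma IsTestFunction.integral_weakIntegrand_planck {φ : ℝ → ℝ} (h : IsTestFunction φ) :
    ∫ y, weakIntegrand φ y (planck y) = 0 := by
  obtain ⟨A, hA, hle⟩ := h.exists_abs_deriv_le
  have hint : Integrable fun y => deriv φ y * (exp y * planck y) :=
    isProfile_planck.integrable_of_le_exp_mul (h.continuous_deriv.mul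
      (continuous_exp.mul continuous_planck)).aestronglyMeasurable hA fun y => by
        rw [abs_mul, abs_of_nonneg (isProfile_planck.exp_mul_nonneg y)]
        exact mul_le_mul_of_nonneg_right (hle y).1 (isProfile_planck.exp_mul_nonneg y)
  refine integral_eq_zero_of_hasDerivAt_of_integrable (fun y => ?_)
    (h.integrable_weakIntegrand isProfile_planck) hint
  refine ((h.contDiff_deriv.differentiable one_ne_zero y).hasDerivAt.mul
    ((Real.hasDerivAt_exp y).mul (hasDerivAt_planck y))).congr_deriv ?_
  simp only [weakIntegrand, Pi.mul_apply, exp_neg]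
  field_simp
  ring

/-! ### The weight of the dissipation -/

/-- `x² eˣ / (eˣ - 1)²` at `x = e^y`, where `eˣ / (eˣ - 1)²` is the variance of the Bose–Einstein
occupation number. Its reciprocal is an integrating factor for the linearization at `planck`. -/
noncomputable def planckVariance (y : ℝ) : ℝ :=
  exp y ^ 2 * exp (exp y) / (exp (exp y) - 1) ^ 2

/-- An elementary function comparable with `planckVariance` whose tail integrals are explicit. -/
noncomputable def varianceMajorant (y : ℝ) : ℝ := (1 + exp y) ^ 2 * exp (-exp y)

/-- The integral of `varianceMajorant` with respect to `dx = e^y dy` over `x ≥ e^y`. -/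
noncomputable def varianceMajorantTail (y : ℝ) : ℝ :=
  ((1 + exp y) ^ 2 + 2 * (1 + exp y) + 2) * exp (-exp y)

/-- The integral of `planckVariance` with respect to `dx = e^y dy` over `x ≥ e^y`. -/
noncomputable def planckVarianceTail (y : ℝ) : ℝ := ∫ s in Ioi y, planckVariance s * exp s

/-- The weight `q` for which the linear part of `d/dt ∫ φ e^y (u - planck)`, with `φ' = -q`, is the
mass excess `∫ e^y (u - planck)`. -/
noncomputable def dissipationWeight (y : ℝ) : ℝ :=
  planckVarianceTail y / (planckVariance y * exp y)

lemma planckVariance_pos (y : ℝ) : 0 < planckVariance y := by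
  have := exp_exp_sub_one_pos y
  unfold planckVariance
  positivity

lemma hasDerivAt_planckVariance (y : ℝ) : HasDerivAt planckVariance
    (planckVariance y * (2 - exp y - 2 * exp (-y) * planck y)) y := by
  have hpos := exp_exp_sub_one_pos y
  have he := Real.hasDerivAt_exp y
  refine (((he.pow 2).mul he.exp).div ((he.exp.sub_const 1).pow 2)
    (pow_pos hpos 2).ne').congr_deriv ?_
  simp only [planckVariance, planck_eq, exp_neg, Pi.pow_apply, Pi.mul_apply]
  field_simp
  ring

lemma continuous_planckVariance_mul_exp : Continuous fun y => planckVariance y * exp y :=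
  (continuous_iff_continuousAt.2 fun y => (hasDerivAt_planckVariance y).continuousAt).mul
    continuous_exp

lemma planckVariance_le_varianceMajorant (y : ℝ) : planckVariance y ≤ varianceMajorant y := by
  have hle : exp y * exp (exp y) ≤ (1 + exp y) * (exp (exp y) - 1) := by
    linarith [add_one_le_exp (exp y)]
  rw [planckVariance, varianceMajorant, div_le_iff₀ (pow_pos (exp_exp_sub_one_pos y) 2), exp_neg,
    ← div_eq_mul_inv, div_mul_eq_mul_div, le_div_iff₀ (exp_pos _), ← mul_pow]
  exact (pow_le_pow_left₀ (by positivity) hle 2).trans_eq' (by ring)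

lemma varianceMajorant_le_planckVariance (y : ℝ) : varianceMajorant y ≤ 4 * planckVariance y := by
  have hx := exp_pos y
  have hle : (1 + exp y) * (exp (exp y) - 1) ≤ 2 * (exp y * exp (exp y)) := by
    have hmul := mul_le_mul_of_nonneg_right (add_one_le_exp (-exp y)) (exp_pos (exp y)).le
    rw [← exp_add, neg_add_cancel, exp_zero] at hmul
    linarith
  rw [planckVariance, varianceMajorant, ← mul_div_assoc, le_div_iff₀ (pow_pos
    (exp_exp_sub_one_pos y) 2), exp_neg, ← div_eq_mul_inv, div_mul_eq_mul_div,
    div_le_iff₀ (exp_pos _), ← mul_pow]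
  have := exp_exp_sub_one_pos y
  exact (pow_le_pow_left₀ (by positivity) hle 2).trans_eq (by ring)

lemma varianceMajorant_mul_exp_nonneg (y : ℝ) : 0 ≤ varianceMajorant y * exp y := by
  unfold varianceMajorant
  positivity

lemma hasDerivAt_varianceMajorantTail (y : ℝ) :
    HasDerivAt varianceMajorantTail (-(varianceMajorant y * exp y)) y := by
  have he := Real.hasDerivAt_exp y
  have he₁ := he.const_add 1
  refine ((((he₁.pow 2).add (he₁.const_mul 2)).add_const 2).mul he.neg.exp).congr_deriv ?_
  simp only [varianceMajorant, Pi.add_apply, Pi.neg_apply, Pi.pow_apply]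
  ring

lemma tendsto_varianceMajorantTail : Tendsto varianceMajorantTail atTop (𝓝 0) := by
  have hpow := tendsto_pow_mul_exp_neg_atTop_nhds_zero
  have hsum := ((hpow 2).add ((hpow 1).const_mul 4)).add ((hpow 0).const_mul 5)
  simp only [mul_zero, add_zero] at hsum
  exact (hsum.comp tendsto_exp_atTop).congr fun y => by
    simp only [varianceMajorantTail, Function.comp_apply]
    ring

lemma integrableOn_varianceMajorant (y : ℝ) :
    IntegrableOn (fun s => varianceMajorant s * exp s) (Ioi y) := by
  simpa using (integrableOn_Ioi_deriv_of_nonpos' (fun s _ => hasDerivAt_varianceMajorantTail s)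
    (fun s _ => neg_nonpos.2 (varianceMajorant_mul_exp_nonneg s)) tendsto_varianceMajorantTail).neg

lemma integral_varianceMajorant (y : ℝ) :
    ∫ s in Ioi y, varianceMajorant s * exp s = varianceMajorantTail y := by
  have h := integral_Ioi_of_hasDerivAt_of_nonpos' (a := y)
    (fun s _ => hasDerivAt_varianceMajorantTail s)
    (fun s _ => neg_nonpos.2 (varianceMajorant_mul_exp_nonneg s)) tendsto_varianceMajorantTail
  rw [integral_neg] at h
  linarith

lemma integrableOn_planckVariance (y : ℝ) :
    IntegrableOn (fun s => planckVariance s * exp s) (Ioi y) := by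
  refine (integrableOn_varianceMajorant y).mono'
    continuous_planckVariance_mul_exp.aestronglyMeasurable (.of_forall fun s => ?_)
  rw [Real.norm_eq_abs, abs_of_pos (mul_pos (planckVariance_pos s) (exp_pos s))]
  exact mul_le_mul_of_nonneg_right (planckVariance_le_varianceMajorant s) (exp_pos s).le

lemma hasDerivAt_planckVarianceTail (y : ℝ) :
    HasDerivAt planckVarianceTail (-(planckVariance y * exp y)) y := by
  have hc := continuous_planckVariance_mul_exp
  have hderiv := (intervalIntegral.integral_hasDerivAt_right (hc.intervalIntegrable 0 y)
    hc.aestronglyMeasurable.stronglyMeasurableAtFilter hc.continuousAt).const_sub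
      (planckVarianceTail 0)
  refine hderiv.congr_of_eventuallyEq (.of_forall fun z => eq_sub_of_add_eq' ?_)
  rw [← eq_sub_iff_add_eq]
  exact (intervalIntegral.integral_Ioi_sub_Ioi' (integrableOn_planckVariance 0)
    (integrableOn_planckVariance z)).symm

lemma planckVarianceTail_le (y : ℝ) : planckVarianceTail y ≤ 20 * planckVariance y := by
  calc planckVarianceTail y ≤ varianceMajorantTail y := by
        rw [← integral_varianceMajorant]
        exact setIntegral_mono (integrableOn_planckVariance y) (integrableOn_varianceMajorant y)
          fun s => mul_le_mul_of_nonneg_right (planckVariance_le_varianceMajorant s) (exp_pos s).le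
    _ ≤ 5 * varianceMajorant y := by
        rw [varianceMajorantTail, varianceMajorant, ← mul_assoc]
        gcongr
        nlinarith [exp_pos y]
    _ ≤ 20 * planckVariance y := by linarith [varianceMajorant_le_planckVariance y]

lemma planckVariance_le_planckVarianceTail (y : ℝ) :
    planckVariance y ≤ 4 * planckVarianceTail y := by
  have hx := exp_pos y
  calc planckVariance y ≤ varianceMajorant y := planckVariance_le_varianceMajorant y
    _ ≤ varianceMajorantTail y := by
        rw [varianceMajorantTail, varianceMajorant]
        gcongr
        linarith
    _ ≤ 4 * planckVarianceTail y := by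
        rw [← integral_varianceMajorant, planckVarianceTail, ← integral_const_mul]
        refine setIntegral_mono (integrableOn_varianceMajorant y)
          ((integrableOn_planckVariance y).const_mul 4) fun s => ?_
        simpa only [mul_assoc] using
          mul_le_mul_of_nonneg_right (varianceMajorant_le_planckVariance s) (exp_pos s).le

lemma hasDerivAt_dissipationWeight (y : ℝ) : HasDerivAt dissipationWeight
    (-1 + dissipationWeight y * (exp y - 3 + 2 * exp (-y) * planck y)) y := by
  have hvar := (planckVariance_pos y).ne'
  refine ((hasDerivAt_planckVarianceTail y).div ((hasDerivAt_planckVariance y).mul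
    (Real.hasDerivAt_exp y)) (mul_ne_zero hvar (exp_pos y).ne')).congr_deriv ?_
  simp only [dissipationWeight, Pi.mul_apply]
  field_simp
  ring

lemma continuous_dissipationWeight : Continuous dissipationWeight :=
  continuous_iff_continuousAt.2 fun y => (hasDerivAt_dissipationWeight y).continuousAt

lemma exp_mul_dissipationWeight (y : ℝ) :
    exp y * dissipationWeight y = planckVarianceTail y / planckVariance y := by
  unfold dissipationWeight
  field_simp

lemma one_le_four_mul_exp_mul_dissipationWeight (y : ℝ) :
    1 ≤ 4 * (exp y * dissipationWeight y) := by
  rw [exp_mul_dissipationWeight, ← mul_div_assoc, one_le_div (planckVariance_pos y)]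
  exact planckVariance_le_planckVarianceTail y

lemma exp_mul_dissipationWeight_le (y : ℝ) : exp y * dissipationWeight y ≤ 20 := by
  rw [exp_mul_dissipationWeight, div_le_iff₀ (planckVariance_pos y)]
  exact planckVarianceTail_le y

lemma dissipationWeight_pos (y : ℝ) : 0 < dissipationWeight y :=
  pos_of_mul_pos_right (by linarith [one_le_four_mul_exp_mul_dissipationWeight y]) (exp_pos y).le

lemma dissipationWeight_le (y : ℝ) : dissipationWeight y ≤ 20 * exp (-y) := by
  rw [exp_neg, ← div_eq_mul_inv, le_div_iff₀' (exp_pos y)]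
  exact exp_mul_dissipationWeight_le y

/-! ### The test function -/

/-- A smooth version of the indicator function of `(-L, ∞)`. -/
noncomputable def step (L y : ℝ) : ℝ := smoothTransition (y + L)

section Step

variable {L y : ℝ}

lemma step_nonneg (L y : ℝ) : 0 ≤ step L y := smoothTransition.nonneg _

lemma step_le_one (L y : ℝ) : step L y ≤ 1 := smoothTransition.le_one _

lemma step_eq_zero (hy : y ≤ -L) : step L y = 0 := smoothTransition.zero_of_nonpos (by linarith)

lemma step_eq_one (hy : 1 - L ≤ y) : step L y = 1 := smoothTransition.one_of_one_le (by linarith)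

lemma contDiff_step (L : ℝ) : ContDiff ℝ 1 (step L) :=
  smoothTransition.contDiff.comp (contDiff_id.add contDiff_const)

lemma continuous_deriv_step (L : ℝ) : Continuous (deriv (step L)) :=
  (contDiff_step L).continuous_deriv_one

lemma deriv_step_nonneg (L y : ℝ) : 0 ≤ deriv (step L) y :=
  (smoothTransition.monotone.comp (monotone_id.add_const L)).deriv_nonneg

lemma deriv_step_eq_zero (hy : y ≤ -L ∨ 1 - L ≤ y) : deriv (step L) y = 0 := by
  rcases hy with hy | hy
  · exact IsLocalMin.deriv_eq_zero (.of_forall fun z => step_eq_zero hy ▸ step_nonneg L z)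
  · exact IsLocalMax.deriv_eq_zero (.of_forall fun z => step_eq_one hy ▸ step_le_one L z)

lemma hasCompactSupport_deriv_step (L : ℝ) : HasCompactSupport (deriv (step L)) :=
  .intro (isCompact_Icc (a := -L) (b := 1 - L)) fun y hy => deriv_step_eq_zero <| by
    by_contra! h
    exact hy ⟨h.1.le, h.2.le⟩

lemma integrable_deriv_step (L : ℝ) : Integrable (deriv (step L)) :=
  (continuous_deriv_step L).integrable_of_hasCompactSupport (hasCompactSupport_deriv_step L)

lemma deriv_step (L y : ℝ) : deriv (step L) y = deriv (step 0) (y + L) := by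
  rw [← deriv_comp_add_const (step 0) L y]
  simp only [step, add_zero]
  rfl

end Step

/-- The test function of the functional `∫ φ e^y (u - planck)`: its derivative is the negative of
the dissipation weight, cut off at `-L`. -/
noncomputable def cutoffPotential (L y : ℝ) : ℝ :=
  -∫ s in (0 : ℝ)..y, dissipationWeight s * step L s

section CutoffPotential

variable {L y : ℝ}

lemma hasDerivAt_cutoffPotential (L y : ℝ) :
    HasDerivAt (cutoffPotential L) (-(dissipationWeight y * step L y)) y := by
  have hc := continuous_dissipationWeight.mul (contDiff_step L).continuous
  exact (intervalIntegral.integral_hasDerivAt_right (hc.intervalIntegrable 0 y)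
    hc.aestronglyMeasurable.stronglyMeasurableAtFilter hc.continuousAt).neg

lemma deriv_cutoffPotential (L : ℝ) :
    deriv (cutoffPotential L) = fun y => -(dissipationWeight y * step L y) :=
  funext fun y => (hasDerivAt_cutoffPotential L y).deriv

lemma deriv_deriv_cutoffPotential (L y : ℝ) : deriv (deriv (cutoffPotential L)) y
    = -((-1 + dissipationWeight y * (exp y - 3 + 2 * exp (-y) * planck y)) * step L y
      + dissipationWeight y * deriv (step L) y) := by
  rw [deriv_cutoffPotential]
  exact ((hasDerivAt_dissipationWeight y).mul
    ((contDiff_step L).differentiable one_ne_zero y).hasDerivAt).neg.deriv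

lemma contDiff_cutoffPotential (L : ℝ) : ContDiff ℝ 2 (cutoffPotential L) := by
  have hweight : ContDiff ℝ 1 dissipationWeight := by
    refine contDiff_one_iff_deriv.2
      ⟨fun y => (hasDerivAt_dissipationWeight y).differentiableAt, ?_⟩
    rw [funext fun y => (hasDerivAt_dissipationWeight y).deriv]
    have := continuous_dissipationWeight
    have := continuous_planck
    fun_prop
  refine (contDiff_succ_iff_deriv (n := 1)).2
    ⟨fun y => (hasDerivAt_cutoffPotential L y).differentiableAt, by simp, ?_⟩
  rw [deriv_cutoffPotential]
  exact (hweight.mul (contDiff_step L)).neg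

lemma cutoffPotential_zero (L : ℝ) : cutoffPotential L 0 = 0 := by simp [cutoffPotential]

lemma antitone_cutoffPotential (L : ℝ) : Antitone (cutoffPotential L) :=
  antitone_of_hasDerivAt_nonpos (hasDerivAt_cutoffPotential L) fun y =>
    neg_nonpos.2 (mul_nonneg (dissipationWeight_pos y).le (step_nonneg L y))

lemma monotone_cutoffPotential_sub (L : ℝ) :
    Monotone fun y => cutoffPotential L y - 20 * exp (-y) := by
  refine monotone_of_hasDerivAt_nonneg
    (fun y => (hasDerivAt_cutoffPotential L y).fun_sub ((hasDerivAt_neg y).exp.const_mul 20))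
    fun y => ?_
  have hle : dissipationWeight y * step L y ≤ 20 * exp (-y) :=
    (mul_le_of_le_one_right (dissipationWeight_pos y).le (step_le_one L y)).trans
      (dissipationWeight_le y)
  change (0 : ℝ) ≤ _
  linarith

lemma cutoffPotential_nonpos (hy : 0 ≤ y) : cutoffPotential L y ≤ 0 :=
  cutoffPotential_zero L ▸ antitone_cutoffPotential L hy

lemma cutoffPotential_nonneg (hy : y ≤ 0) : 0 ≤ cutoffPotential L y :=
  cutoffPotential_zero L ▸ antitone_cutoffPotential L hy

lemma exp_mul_cutoffPotential_le (hy : y ≤ 0) : cutoffPotential L y * exp y ≤ 20 := by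
  have h := monotone_cutoffPotential_sub L hy
  simp only [cutoffPotential_zero, neg_zero, exp_zero] at h
  rw [← le_div_iff₀ (exp_pos y), div_eq_mul_inv, ← exp_neg]
  linarith

lemma neg_twenty_le_cutoffPotential (L y : ℝ) : -20 ≤ cutoffPotential L y := by
  rcases le_total 0 y with hy | hy
  · have h := monotone_cutoffPotential_sub L hy
    simp only [cutoffPotential_zero, neg_zero, exp_zero] at h
    linarith [exp_pos (-y)]
  · linarith [cutoffPotential_nonneg (L := L) hy]

lemma cutoffPotential_eq_of_le (hy : y ≤ -L) : cutoffPotential L y = cutoffPotential L (-L) := by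
  rw [cutoffPotential, cutoffPotential, ← intervalIntegral.integral_add_adjacent_intervals
    (b := -L) (c := y)]
  · have : ∫ s in (-L)..y, dissipationWeight s * step L s = 0 :=
      intervalIntegral.integral_zero_ae (.of_forall fun s hs => by
        rw [uIoc_of_ge hy] at hs
        rw [step_eq_zero hs.2, mul_zero])
    rw [this, add_zero]
  all_goals
    exact (continuous_dissipationWeight.mul (contDiff_step L).continuous).intervalIntegrable _ _

lemma cutoffPotential_le (hL : 0 ≤ L) (y : ℝ) : cutoffPotential L y ≤ 20 * exp L := by
  have hle : ∀ z ∈ Icc (-L) 0, cutoffPotential L z ≤ 20 * exp L := fun z hz => by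
    have h := exp_mul_cutoffPotential_le (L := L) hz.2
    rw [← le_div_iff₀ (exp_pos z), div_eq_mul_inv, ← exp_neg] at h
    exact h.trans (by gcongr; linarith [hz.1])
  rcases le_total 0 y with hy | hy
  · exact (cutoffPotential_nonpos hy).trans (by positivity)
  rcases le_total y (-L) with hyL | hyL
  · exact cutoffPotential_eq_of_le hyL ▸ hle _ ⟨le_rfl, neg_nonpos.2 hL⟩
  · exact hle y ⟨hyL, hy⟩

lemma abs_deriv_dissipationWeight_le (y : ℝ) :
    |-1 + dissipationWeight y * (exp y - 3 + 2 * exp (-y) * planck y)|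
      ≤ 19 + 3 * dissipationWeight y := by
  have hweight := dissipationWeight_pos y
  have hexp := exp_mul_dissipationWeight_le y
  have hpos : 0 ≤ dissipationWeight y * (exp (-y) * planck y) := by
    have := planck_pos y
    positivity
  have hle : dissipationWeight y * (exp (-y) * planck y) ≤ dissipationWeight y := by
    refine mul_le_of_le_one_right hweight.le ?_
    rw [exp_neg, inv_mul_le_one₀ (exp_pos y)]
    exact planck_le_exp y
  have := mul_pos (exp_pos y) hweight
  rw [abs_le]
  constructor <;> linarith

lemma abs_deriv_deriv_cutoffPotential_le {B : ℝ} (hB : ∀ y, |deriv (step L) y| ≤ B) (y : ℝ) :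
    |deriv (deriv (cutoffPotential L)) y| ≤ 19 + 60 * exp L + 20 * exp L * B := by
  have hB₀ : 0 ≤ B := (abs_nonneg _).trans (hB 0)
  rw [deriv_deriv_cutoffPotential, abs_neg]
  rcases le_total y (-L) with hy | hy
  · rw [step_eq_zero hy, deriv_step_eq_zero (.inl hy), mul_zero, mul_zero, add_zero, abs_zero]
    positivity
  have hweight : dissipationWeight y ≤ 20 * exp L :=
    (dissipationWeight_le y).trans (by gcongr; linarith)
  refine (abs_add_le _ _).trans (add_le_add ?_ ?_)
  · rw [abs_mul, abs_of_nonneg (step_nonneg L y)]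
    refine (mul_le_of_le_one_right (abs_nonneg _) (step_le_one L y)).trans
      ((abs_deriv_dissipationWeight_le y).trans ?_)
    linarith
  · rw [abs_mul, abs_of_pos (dissipationWeight_pos y)]
    exact mul_le_mul hweight (hB y) (abs_nonneg _) (by positivity)

lemma isTestFunction_cutoffPotential (hL : 0 ≤ L) : IsTestFunction (cutoffPotential L) where
  contDiff := contDiff_cutoffPotential L
  exists_bound := by
    obtain ⟨B, hB⟩ := (hasCompactSupport_deriv_step L).exists_bound_of_continuous
      (continuous_deriv_step L)
    have hB₀ : 0 ≤ 20 * exp L * B := mul_nonneg (by positivity) ((norm_nonneg _).trans (hB 0))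
    have hexpL := one_le_exp hL
    refine ⟨19 + 60 * exp L + 20 * exp L * B, fun y => ⟨?_, ?_,
      abs_deriv_deriv_cutoffPotential_le hB y⟩⟩
    · rw [abs_le]
      constructor <;> linarith [neg_twenty_le_cutoffPotential L y, cutoffPotential_le hL y]
    · have hweight : 0 ≤ exp y * dissipationWeight y :=
        mul_nonneg (exp_pos y).le (dissipationWeight_pos y).le
      rw [deriv_cutoffPotential, mul_neg, abs_neg, ← mul_assoc,
        abs_of_nonneg (mul_nonneg hweight (step_nonneg L y))]
      linarith [mul_le_of_le_one_right hweight (step_le_one L y), exp_mul_dissipationWeight_le y]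
  eventually_deriv_eq_zero := by
    filter_upwards [eventually_le_atBot (-L)] with y hy
    simp [deriv_cutoffPotential, step_eq_zero hy]

end CutoffPotential

/-! ### Inequalities at a fixed time -/

/-- The photon number of `v`, a function of `y = log x`, in excess of that of the Planck
distribution. -/
noncomputable def massExcess (v : ℝ → ℝ) : ℝ := (∫ y, exp y * v y) - ∫ y, exp y * planck y

/-- The functional `∫ φ e^y (v - planck)` with `φ = cutoffPotential L`, whose growth is
incompatible with the absence of photon loss. -/
noncomputable def cutoffFunctional (L : ℝ) (v : ℝ → ℝ) : ℝ :=
  (∫ y, cutoffPotential L y * exp y * v y) - ∫ y, cutoffPotential L y * exp y * planck y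

/-- The density of the quadratic gain in the growth rate of `cutoffFunctional L`. -/
noncomputable def dissipationDensity (L : ℝ) (v : ℝ → ℝ) (y : ℝ) : ℝ :=
  dissipationWeight y * step L y * (v y - planck y) ^ 2

/-- The contribution of the region `-L ≤ y ≤ 1 - L`, where the test function is cut off, to the
growth rate of `cutoffFunctional L`; the constant `20` is the upper bound for `e^y q`. -/
noncomputable def cutoffLeakage (L : ℝ) (v : ℝ → ℝ) : ℝ := 20 * ∫ y, v y * deriv (step L) y

lemma integrable_indicator_Iic_exp (a : ℝ) : Integrable ((Iic a).indicator exp) :=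
  (integrableOn_exp_Iic a).integrable_indicator measurableSet_Iic

lemma integral_indicator_Iic_exp (a : ℝ) : ∫ y, (Iic a).indicator exp y = exp a := by
  rw [integral_indicator measurableSet_Iic, integral_exp_Iic]

lemma weakIntegrand_cutoffPotential_sub (L y v : ℝ) :
    weakIntegrand (cutoffPotential L) y v - weakIntegrand (cutoffPotential L) y (planck y)
      = exp y * step L y * (v - planck y)
        - exp y * dissipationWeight y * deriv (step L) y * (v - planck y)
        + dissipationWeight y * step L y * (v - planck y) ^ 2 := by
  rw [weakIntegrand, weakIntegrand, deriv_deriv_cutoffPotential, deriv_cutoffPotential, exp_neg]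
  field_simp
  ring

/-- By the arithmetic-geometric mean inequality, because `1/4 ≤ e^y q`. -/
lemma twenty_mul_le_dissipationWeight_mul_sq {l : ℝ} (hl : 0 < l) (y w : ℝ) :
    20 * w ≤ 4 * l * (dissipationWeight y * w ^ 2) + 100 / l * exp y := by
  have hexp := exp_pos y
  have hsq : 20 * w ≤ l * w ^ 2 / exp y + 100 / l * exp y := by
    have hnonneg : 0 ≤ (l * w - 10 * exp y) ^ 2 / (l * exp y) := by positivity
    have heq : (l * w - 10 * exp y) ^ 2 / (l * exp y)
        = l * w ^ 2 / exp y + 100 / l * exp y - 20 * w := by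
      field_simp
      ring
    linarith
  have hweight : l * w ^ 2 / exp y ≤ 4 * l * (dissipationWeight y * w ^ 2) := by
    rw [div_le_iff₀ hexp]
    have := mul_le_mul_of_nonneg_left (one_le_four_mul_exp_mul_dissipationWeight y)
      (by positivity : 0 ≤ l * w ^ 2)
    linarith
  linarith

lemma dissipationDensity_nonneg (L : ℝ) (v : ℝ → ℝ) (y : ℝ) : 0 ≤ dissipationDensity L v y :=
  mul_nonneg (mul_nonneg (dissipationWeight_pos y).le (step_nonneg L y)) (sq_nonneg _)

namespace IsProfile

variable {M E L : ℝ} {v : ℝ → ℝ}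

lemma integrable_mul_deriv_step (h : IsProfile M E v) (L : ℝ) :
    Integrable fun y => v y * deriv (step L) y :=
  (h.continuous.mul (continuous_deriv_step L)).integrable_of_hasCompactSupport
    (hasCompactSupport_deriv_step L).mul_left

lemma integrable_dissipationDensity (h : IsProfile M E v) (L : ℝ) :
    Integrable (dissipationDensity L v) := by
  have hdiff : ∀ y, (v y - planck y) ^ 2 ≤ (M + 2) * (v y + planck y) := fun y => by
    have := h.nonneg y
    have := h.le y
    have := isProfile_planck.nonneg y
    have := isProfile_planck.le y
    nlinarith
  have hweight : ∀ y, dissipationWeight y * step L y ≤ 20 * exp L * exp L * exp y := fun y => by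
    rcases le_total y (-L) with hy | hy
    · rw [step_eq_zero hy, mul_zero]
      positivity
    · have hexp : 1 ≤ exp L * exp y := by
        rw [← exp_add]
        exact one_le_exp (by linarith)
      calc dissipationWeight y * step L y ≤ dissipationWeight y :=
            mul_le_of_le_one_right (dissipationWeight_pos y).le (step_le_one L y)
        _ ≤ 20 * exp L := (dissipationWeight_le y).trans (by gcongr; linarith)
        _ ≤ 20 * exp L * (exp L * exp y) := le_mul_of_one_le_right (by positivity) hexp
        _ = 20 * exp L * exp L * exp y := by ring
  have hcont : Continuous (dissipationDensity L v) :=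
    (continuous_dissipationWeight.mul (contDiff_step L).continuous).mul
      ((h.continuous.sub continuous_planck).pow 2)
  refine ((h.integrable_exp_mul.add isProfile_planck.integrable_exp_mul).const_mul
    (20 * exp L * exp L * (M + 2))).mono' hcont.aestronglyMeasurable (.of_forall fun y => ?_)
  rw [Real.norm_eq_abs, abs_of_nonneg (dissipationDensity_nonneg L v y)]
  calc dissipationDensity L v y ≤ 20 * exp L * exp L * exp y * ((M + 2) * (v y + planck y)) :=
        mul_le_mul (hweight y) (hdiff y) (sq_nonneg _) (by positivity)
    _ = 20 * exp L * exp L * (M + 2) * (exp y * v y + exp y * planck y) := by ring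

lemma cutoffFunctional_eq (h : IsProfile M E v) (hL : 0 ≤ L) :
    cutoffFunctional L v = ∫ y, cutoffPotential L y * exp y * (v y - planck y) := by
  have hφ := isTestFunction_cutoffPotential hL
  simp only [mul_sub]
  exact (integral_sub (hφ.integrable_mul h) (hφ.integrable_mul isProfile_planck)).symm

lemma integrable_cutoffPotential_mul_sub (h : IsProfile M E v) (hL : 0 ≤ L) :
    Integrable fun y => cutoffPotential L y * exp y * (v y - planck y) := by
  have hφ := isTestFunction_cutoffPotential hL
  simp only [mul_sub]
  exact (hφ.integrable_mul h).sub (hφ.integrable_mul isProfile_planck)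

lemma le_cutoffPotential_mul_sub (h : IsProfile M E v) (L y : ℝ) :
    -20 * (exp y * v y) - 20 * (Iic 0).indicator exp y
      ≤ cutoffPotential L y * exp y * (v y - planck y) := by
  have hv := h.exp_mul_nonneg y
  have hplanck := isProfile_planck.exp_mul_nonneg y
  rcases le_or_gt y 0 with hy | hy
  · rw [indicator_of_mem (mem_Iic.2 hy)]
    have := mul_nonneg (cutoffPotential_nonneg (L := L) hy) hv
    have := mul_le_mul (exp_mul_cutoffPotential_le (L := L) hy) (planck_le_exp y)
      (planck_pos y).le (by norm_num)
    linarith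
  · rw [indicator_of_notMem (notMem_Iic.2 hy)]
    have := mul_le_mul_of_nonneg_right (neg_twenty_le_cutoffPotential L y) hv
    have := mul_nonpos_of_nonpos_of_nonneg (cutoffPotential_nonpos (L := L) hy.le) hplanck
    linarith

lemma le_cutoffFunctional (h : IsProfile M E v) (hL : 0 ≤ L) :
    -20 * (∫ y, exp y * v y) - 20 ≤ cutoffFunctional L v := by
  have hmass := h.integrable_exp_mul.const_mul (-20)
  have hexp := (integrable_indicator_Iic_exp 0).const_mul 20
  calc -20 * (∫ y, exp y * v y) - 20
      = ∫ y, (-20 * (exp y * v y) - 20 * (Iic 0).indicator exp y) := by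
        rw [integral_sub hmass hexp, integral_const_mul, integral_const_mul,
          integral_indicator_Iic_exp, exp_zero, mul_one]
    _ ≤ ∫ y, cutoffPotential L y * exp y * (v y - planck y) :=
        integral_mono (hmass.sub hexp) (h.integrable_cutoffPotential_mul_sub hL)
          (h.le_cutoffPotential_mul_sub L)
    _ = cutoffFunctional L v := (h.cutoffFunctional_eq hL).symm

lemma le_weakIntegrand_cutoffPotential_sub (h : IsProfile M E v) (L y : ℝ) :
    exp y * v y - exp y * planck y - M * (Iic (1 - L)).indicator exp y
        - 20 * (v y * deriv (step L) y) + dissipationDensity L v y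
      ≤ weakIntegrand (cutoffPotential L) y (v y)
        - weakIntegrand (cutoffPotential L) y (planck y) := by
  have hv := h.nonneg y
  have hexp := exp_pos y
  have hplanck := planck_pos y
  have hstep' := deriv_step_nonneg L y
  rw [weakIntegrand_cutoffPotential_sub, dissipationDensity]
  have hleak : exp y * dissipationWeight y * deriv (step L) y * (v y - planck y)
      ≤ 20 * (v y * deriv (step L) y) := by
    have hweight := dissipationWeight_pos y
    calc exp y * dissipationWeight y * deriv (step L) y * (v y - planck y)
        ≤ exp y * dissipationWeight y * deriv (step L) y * v y :=
          mul_le_mul_of_nonneg_left (by linarith) (by positivity)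
      _ = exp y * dissipationWeight y * (v y * deriv (step L) y) := by ring
      _ ≤ 20 * (v y * deriv (step L) y) :=
          mul_le_mul_of_nonneg_right (exp_mul_dissipationWeight_le y) (by positivity)
  have hmass : exp y * v y - exp y * planck y - M * (Iic (1 - L)).indicator exp y
      ≤ exp y * step L y * (v y - planck y) := by
    rcases le_or_gt y (1 - L) with hy | hy
    · rw [indicator_of_mem (mem_Iic.2 hy)]
      have hcut : (1 - step L y) * (v y - planck y) ≤ M :=
        calc (1 - step L y) * (v y - planck y) ≤ (1 - step L y) * v y :=
              mul_le_mul_of_nonneg_left (by linarith) (by linarith [step_le_one L y])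
          _ ≤ v y := mul_le_of_le_one_left hv (by linarith [step_nonneg L y])
          _ ≤ M := h.le y
      linarith [mul_le_mul_of_nonneg_left hcut hexp.le]
    · rw [indicator_of_notMem (notMem_Iic.2 hy), step_eq_one hy.le]
      linarith
  linarith

lemma le_integral_weakIntegrand_cutoffPotential (h : IsProfile M E v) (hL : 0 ≤ L) :
    massExcess v - M * exp (1 - L) - cutoffLeakage L v + ∫ y, dissipationDensity L v y
      ≤ ∫ y, weakIntegrand (cutoffPotential L) y (v y) := by
  have hφ := isTestFunction_cutoffPotential hL
  have hmass := h.integrable_exp_mul.sub isProfile_planck.integrable_exp_mul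
  have hexp := (integrable_indicator_Iic_exp (1 - L)).const_mul M
  have hleak := (h.integrable_mul_deriv_step L).const_mul 20
  have hdiss := h.integrable_dissipationDensity L
  have hv := hφ.integrable_weakIntegrand h
  have hplanck := hφ.integrable_weakIntegrand isProfile_planck
  have hle := integral_mono (((hmass.sub hexp).sub hleak).add hdiss) (hv.sub hplanck)
    (h.le_weakIntegrand_cutoffPotential_sub L)
  rw [integral_add' ((hmass.sub hexp).sub hleak) hdiss, integral_sub' (hmass.sub hexp) hleak,
    integral_sub' hmass hexp,
    integral_sub' h.integrable_exp_mul isProfile_planck.integrable_exp_mul,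
    integral_sub' hv hplanck, integral_const_mul, integral_const_mul, integral_indicator_Iic_exp,
    hφ.integral_weakIntegrand_planck, sub_zero] at hle
  exact hle

lemma cutoffPotential_mul_sub_le (h : IsProfile M E v) (hL : 0 ≤ L) {l : ℝ} (hl : 0 < l) (y : ℝ) :
    cutoffPotential L y * exp y * (v y - planck y)
      ≤ 4 * l * dissipationDensity L v y + 20 * (exp y * planck y)
        + 100 / l * (Iic 0).indicator exp y
        + 20 * M * exp L * (Iic (1 - L)).indicator exp y := by
  have hexp := exp_pos y
  have hM := h.bound_nonneg
  have hplanck := planck_pos y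
  have hdiss := dissipationDensity_nonneg L v y
  have hindicator : ∀ a, 0 ≤ (Iic a).indicator exp y := fun a =>
    indicator_nonneg (fun z _ => (exp_pos z).le) y
  have hzero := hindicator 0
  have hcut := hindicator (1 - L)
  rcases lt_or_ge 0 y with hy | hy
  · have hφv := mul_nonpos_of_nonpos_of_nonneg (cutoffPotential_nonpos (L := L) hy.le)
      (h.exp_mul_nonneg y)
    have hφplanck := mul_le_mul_of_nonneg_right (neg_twenty_le_cutoffPotential L y)
      (mul_pos hexp hplanck).le
    have : 0 ≤ 4 * l * dissipationDensity L v y + 100 / l * (Iic 0).indicator exp y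
      + 20 * M * exp L * (Iic (1 - L)).indicator exp y := by positivity
    linarith
  have hφ := cutoffPotential_nonneg (L := L) hy
  rcases le_total (v y) (planck y) with hv | hv
  · exact (mul_nonpos_of_nonneg_of_nonpos (by positivity) (sub_nonpos.2 hv)).trans (by positivity)
  have hsub := sub_nonneg.2 hv
  rcases le_or_gt y (1 - L) with hyL | hyL
  · have : cutoffPotential L y * exp y * (v y - planck y) ≤ 20 * exp L * exp y * M := by
      gcongr
      · exact cutoffPotential_le hL y
      · linarith [h.le y]
    have : 0 ≤ 4 * l * dissipationDensity L v y + 20 * (exp y * planck y)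
      + 100 / l * (Iic 0).indicator exp y := by positivity
    rw [indicator_of_mem (mem_Iic.2 hyL)]
    linarith
  · have hamgm := twenty_mul_le_dissipationWeight_mul_sq hl y (v y - planck y)
    have := mul_le_mul_of_nonneg_right (exp_mul_cutoffPotential_le (L := L) hy) hsub
    have : 0 ≤ 20 * (exp y * planck y) := by positivity
    rw [indicator_of_mem (mem_Iic.2 hy), indicator_of_notMem (notMem_Iic.2 hyL),
      dissipationDensity, step_eq_one hyL.le]
    linarith

lemma cutoffFunctional_le (h : IsProfile M E v) (hL : 0 ≤ L) {l : ℝ} (hl : 0 < l) :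
    cutoffFunctional L v ≤ 4 * l * (∫ y, dissipationDensity L v y)
      + 20 * (∫ y, exp y * planck y) + 100 / l + 20 * M * exp 1 := by
  have hdiss := (h.integrable_dissipationDensity L).const_mul (4 * l)
  have hplanck := isProfile_planck.integrable_exp_mul.const_mul 20
  have hzero := (integrable_indicator_Iic_exp 0).const_mul (100 / l)
  have hcut := (integrable_indicator_Iic_exp (1 - L)).const_mul (20 * M * exp L)
  have hle := integral_mono (h.integrable_cutoffPotential_mul_sub hL)
    (((hdiss.add hplanck).add hzero).add hcut) (h.cutoffPotential_mul_sub_le hL hl)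
  rw [integral_add' ((hdiss.add hplanck).add hzero) hcut, integral_add' (hdiss.add hplanck) hzero,
    integral_add' hdiss hplanck, integral_const_mul, integral_const_mul, integral_const_mul,
    integral_const_mul, integral_indicator_Iic_exp, integral_indicator_Iic_exp, exp_zero, mul_one,
    mul_assoc (20 * M), ← exp_add, add_sub_cancel, ← h.cutoffFunctional_eq hL] at hle
  exact hle

lemma sq_max_cutoffFunctional_sub_le (h : IsProfile M E v) (hL : 0 ≤ L) :
    max (cutoffFunctional L v - (20 * (∫ y, exp y * planck y) + 20 * M * exp 1)) 0 ^ 2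
      ≤ 1600 * ∫ y, dissipationDensity L v y := by
  have hdiss : 0 ≤ ∫ y, dissipationDensity L v y :=
    integral_nonneg (dissipationDensity_nonneg L v)
  set F := cutoffFunctional L v - (20 * (∫ y, exp y * planck y) + 20 * M * exp 1)
  rcases le_or_gt F 0 with hF₀ | hF₀
  · rw [max_eq_right hF₀]
    linarith
  rw [max_eq_left hF₀.le]
  have hle := h.cutoffFunctional_le hL (l := 200 / F) (by positivity)
  have hdiv : 100 / (200 / F) = F / 2 := by
    field_simp
    norm_num
  have hmul : F / 2 ≤ 800 * (∫ y, dissipationDensity L v y) / F := by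
    rw [hdiv] at hle
    rw [show 800 * (∫ y, dissipationDensity L v y) / F
      = 4 * (200 / F) * ∫ y, dissipationDensity L v y by ring]
    linarith
  rw [le_div_iff₀ hF₀] at hmul
  linarith

lemma add_sq_max_le_integral_weakIntegrand (h : IsProfile M E v) (hL : 0 ≤ L) :
    massExcess v - M * exp (1 - L) - cutoffLeakage L v
        + max (cutoffFunctional L v - (20 * (∫ y, exp y * planck y) + 20 * M * exp 1)) 0 ^ 2 / 1600
      ≤ ∫ y, weakIntegrand (cutoffPotential L) y (v y) := by
  linarith [h.le_integral_weakIntegrand_cutoffPotential hL, h.sq_max_cutoffFunctional_sub_le hL]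

end IsProfile

/-! ### Blow-up of the functional -/

section Translation

variable {w g : ℝ → ℝ} {B : ℝ}

lemma abs_integral_mul_comp_add_le (hB : ∀ y, |w y| ≤ B) (hg : Integrable g) (L : ℝ) :
    |∫ y, w y * g (y + L)| ≤ B * ∫ y, |g y| := by
  rw [← integral_add_right_eq_self (fun y => |g y|) L, ← integral_const_mul, ← Real.norm_eq_abs]
  refine norm_integral_le_of_norm_le ((hg.comp_add_right L).abs.const_mul B)
    (.of_forall fun y => ?_)
  rw [norm_mul]
  exact mul_le_mul_of_nonneg_right (hB y) (norm_nonneg _)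

lemma tendsto_integral_mul_comp_add (hw : Continuous w) (hB : ∀ y, |w y| ≤ B)
    (hw₀ : Tendsto w atBot (𝓝 0)) (hg : Integrable g) :
    Tendsto (fun L => ∫ y, w y * g (y + L)) atTop (𝓝 0) := by
  have htranslate : ∀ L, ∫ y, w (y - L) * g y = ∫ y, w y * g (y + L) := fun L => by
    simpa using (integral_add_right_eq_self (fun y => w (y - L) * g y) L).symm
  have hlim : Tendsto (fun L => ∫ y, w (y - L) * g y) atTop (𝓝 (∫ _ : ℝ, (0 : ℝ))) := by
    refine tendsto_integral_filter_of_dominated_convergence (fun y => B * |g y|)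
      (.of_forall fun L =>
        (hw.comp (continuous_id.sub continuous_const)).aestronglyMeasurable.mul hg.1)
      (.of_forall fun L => .of_forall fun y => ?_) (hg.abs.const_mul B) (.of_forall fun y => ?_)
    · rw [norm_mul]
      exact mul_le_mul_of_nonneg_right (hB _) (norm_nonneg _)
    · have hsub : Tendsto (fun L => y - L) atTop atBot :=
        tendsto_atBot_add_const_left _ y tendsto_neg_atTop_atBot
      simpa using (hw₀.comp hsub).mul_const (g y)
  rw [integral_zero] at hlim
  exact hlim.congr htranslate

end Translation

lemma cutoffLeakage_eq (L : ℝ) (v : ℝ → ℝ) :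
    cutoffLeakage L v = 20 * ∫ y, v y * deriv (step 0) (y + L) := by
  simp only [cutoffLeakage, deriv_step L]

namespace IsProfile

variable {M E : ℝ} {v : ℝ → ℝ}

lemma abs_le (h : IsProfile M E v) (y : ℝ) : |v y| ≤ M :=
  (abs_of_nonneg (h.nonneg y)).trans_le (h.le y)

lemma cutoffLeakage_nonneg (h : IsProfile M E v) (L : ℝ) : 0 ≤ cutoffLeakage L v :=
  mul_nonneg (by norm_num)
    (integral_nonneg fun y => mul_nonneg (h.nonneg y) (deriv_step_nonneg L y))

lemma abs_cutoffLeakage_le (h : IsProfile M E v) (L : ℝ) :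
    |cutoffLeakage L v| ≤ 20 * (M * ∫ y, |deriv (step 0) y|) := by
  rw [cutoffLeakage_eq, abs_mul, abs_of_pos (by norm_num : (0 : ℝ) < 20)]
  gcongr
  exact abs_integral_mul_comp_add_le h.abs_le (integrable_deriv_step 0) L

lemma tendsto_cutoffLeakage (h : IsProfile M E v) :
    Tendsto (fun L => cutoffLeakage L v) atTop (𝓝 0) := by
  simp only [cutoffLeakage_eq]
  simpa using (tendsto_integral_mul_comp_add h.continuous h.abs_le h.tendsto_atBot
    (integrable_deriv_step 0)).const_mul 20

end IsProfile

namespace IsLosslessLogSol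

variable {M : ℝ} {u : ℝ → ℝ → ℝ} {t₁ t₂ : ℝ}

lemma massExcess_eq (h : IsLosslessLogSol M u) (ht₁ : 0 < t₁) (ht : t₁ ≤ t₂) :
    massExcess (u t₂) = massExcess (u t₁) := by
  rw [massExcess, massExcess, h.integral_exp_mul_eq ht₁ ht]

lemma continuousOn_cutoffLeakage (h : IsLosslessLogSol M u) (L : ℝ) :
    ContinuousOn (fun t => cutoffLeakage L (u t)) (Ioi 0) := by
  have hcont := continuous_deriv_step L
  obtain ⟨B, hB⟩ := (hasCompactSupport_deriv_step L).mul_right.exists_bound_of_continuous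
    (hcont.mul (continuous_exp.comp continuous_neg))
  refine fun t ht => ((h.continuousAt_integral (g := fun y v => v * deriv (step L) y)
    (by fun_prop) ((norm_nonneg _).trans (hB 0)) (fun y v hv _ => ?_) ht).const_mul
      20).continuousWithinAt
  calc |v * deriv (step L) y| = ‖deriv (step L) y * exp (-y)‖ * (exp y * v) := by
        rw [norm_mul, Real.norm_eq_abs, Real.norm_eq_abs, abs_mul, abs_of_nonneg hv, abs_exp,
          exp_neg]
        field_simp
    _ ≤ B * (exp y * v) := mul_le_mul_of_nonneg_right (hB y) (by positivity)

lemma tendsto_integral_cutoffLeakage (h : IsLosslessLogSol M u) (ht₁ : 0 < t₁) (ht : t₁ ≤ t₂) :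
    Tendsto (fun L => ∫ t in t₁..t₂, cutoffLeakage L (u t)) atTop (𝓝 0) := by
  have hpos : ∀ t ∈ uIoc t₁ t₂, 0 < t := fun t ht' =>
    ht₁.trans (uIoc_of_le ht ▸ ht' : t ∈ Ioc t₁ t₂).1
  have hlim := intervalIntegral.tendsto_integral_filter_of_dominated_convergence
    (μ := volume) (a := t₁) (b := t₂) (l := atTop) (F := fun L t => cutoffLeakage L (u t))
    (f := fun _ => 0) (fun _ => 20 * (M * ∫ y, |deriv (step 0) y|))
    (.of_forall fun L =>
      ((h.continuousOn_cutoffLeakage L).mono hpos).aestronglyMeasurable measurableSet_uIoc)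
    (.of_forall fun L => .of_forall fun t ht' =>
      (h.isProfile (hpos t ht')).elim fun _ hE => hE.abs_cutoffLeakage_le L)
    intervalIntegrable_const
    (.of_forall fun t ht' => (h.isProfile (hpos t ht')).elim fun _ hE => hE.tendsto_cutoffLeakage)
  simpa using hlim

end IsLosslessLogSol

section Riccati

variable {H H' : ℝ → ℝ} {a c t₀ T : ℝ}

lemma add_mul_sub_le_of_le_deriv (ht : t₀ ≤ T) (hH : ∀ t ∈ Icc t₀ T, HasDerivAt H (H' t) t)
    (hle : ∀ t ∈ Icc t₀ T, a ≤ H' t) : H t₀ + a * (T - t₀) ≤ H T := by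
  have h := (convex_Icc t₀ T).mul_sub_le_image_sub_of_le_deriv
    (fun t ht' => (hH t ht').continuousAt.continuousWithinAt)
    (fun t ht' => (hH t (interior_subset ht')).differentiableAt.differentiableWithinAt)
    (C := a) (fun t ht' => (hH t (interior_subset ht')).deriv ▸ hle t (interior_subset ht'))
    t₀ (left_mem_Icc.2 ht) T (right_mem_Icc.2 ht) ht
  linarith

lemma sub_lt_inv_of_mul_sq_le_deriv (hc : 0 < c) (ht : t₀ ≤ T)
    (hH : ∀ t ∈ Icc t₀ T, HasDerivAt H (H' t) t) (hle : ∀ t ∈ Icc t₀ T, c * H t ^ 2 ≤ H' t)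
    (hone : ∀ t ∈ Icc t₀ T, 1 ≤ H t) : T - t₀ < c⁻¹ := by
  have hpos : ∀ t ∈ Icc t₀ T, 0 < H t := fun t ht' => one_pos.trans_le (hone t ht')
  have hinv := add_mul_sub_le_of_le_deriv (H := fun t => -(H t)⁻¹) (a := c) ht
    (fun t ht' => ((hH t ht').fun_inv (hpos t ht').ne').fun_neg) fun t ht' => by
      rw [neg_div, neg_neg, le_div_iff₀ (pow_pos (hpos t ht') 2)]
      exact hle t ht'
  have hT := inv_pos.2 (hpos T (right_mem_Icc.2 ht))
  have ht₀ := inv_le_one_of_one_le₀ (hone t₀ (left_mem_Icc.2 ht))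
  rw [← one_div, lt_div_iff₀ hc]
  linarith

lemma lt_of_add_mul_sq_max_le_deriv {B : ℝ} (ha : 0 < a) (hc : 0 < c) (hB : 0 ≤ B)
    (hH : ∀ t ∈ Icc t₀ T, HasDerivAt H (H' t) t)
    (hle : ∀ t ∈ Icc t₀ T, a + c * max (H t) 0 ^ 2 ≤ H' t) (ht₀ : -B ≤ H t₀) :
    T < t₀ + (B + 1) / a + c⁻¹ := by
  have hdiv : 0 < (B + 1) / a := by positivity
  rcases lt_or_ge T (t₀ + (B + 1) / a) with hT | hT
  · linarith [inv_pos.2 hc]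
  have hone : ∀ t ∈ Icc (t₀ + (B + 1) / a) T, 1 ≤ H t := fun t ht => by
    have hsub : Icc t₀ t ⊆ Icc t₀ T := Icc_subset_Icc_right ht.2
    have hgrowth := add_mul_sub_le_of_le_deriv (a := a) (by linarith [ht.1])
      (fun s hs => hH s (hsub hs))
      fun s hs => (le_add_of_nonneg_right (by positivity)).trans (hle s (hsub hs))
    have hdiv_le : (B + 1) / a ≤ t - t₀ := by linarith [ht.1]
    rw [div_le_iff₀ ha] at hdiv_le
    linarith
  have hsub : Icc (t₀ + (B + 1) / a) T ⊆ Icc t₀ T := Icc_subset_Icc_left (by linarith)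
  have hlife := sub_lt_inv_of_mul_sq_le_deriv hc hT (fun t ht => hH t (hsub ht))
    (fun t ht => ?_) hone
  · linarith
  have h := hle t (hsub ht)
  rw [max_eq_left (by linarith [hone t ht])] at h
  linarith

end Riccati

namespace IsLosslessLogSol

variable {M L a : ℝ} {u : ℝ → ℝ → ℝ} {t t₁ t₂ T : ℝ}

lemma hasDerivAt_cutoffFunctional (h : IsLosslessLogSol M u) (hL : 0 ≤ L) (ht : 0 < t) :
    HasDerivAt (fun s => cutoffFunctional L (u s))
      (∫ y, weakIntegrand (cutoffPotential L) y (u t y)) t :=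
  (h.hasDerivAt_integral_mul (isTestFunction_cutoffPotential hL) ht).sub_const _

lemma intervalIntegrable_cutoffLeakage (h : IsLosslessLogSol M u) (L : ℝ) (ht₁ : 0 < t₁)
    (ht : t₁ ≤ t₂) : IntervalIntegrable (fun t => cutoffLeakage L (u t)) volume t₁ t₂ :=
  ((h.continuousOn_cutoffLeakage L).mono fun _ hs =>
    ht₁.trans_le hs.1).intervalIntegrable_of_Icc ht

lemma hasDerivAt_integral_cutoffLeakage (h : IsLosslessLogSol M u) (L : ℝ) (ht₁ : 0 < t₁)
    (ht : t₁ ≤ t₂) :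
    HasDerivAt (fun s => ∫ t in t₁..s, cutoffLeakage L (u t)) (cutoffLeakage L (u t₂)) t₂ :=
  have hcont := h.continuousOn_cutoffLeakage L
  have ht₂ := ht₁.trans_le ht
  intervalIntegral.integral_hasDerivAt_right (h.intervalIntegrable_cutoffLeakage L ht₁ ht)
    (hcont.stronglyMeasurableAtFilter isOpen_Ioi t₂ ht₂) (hcont.continuousAt (Ioi_mem_nhds ht₂))

lemma exists_cutoff_integral_cutoffLeakage_le (h : IsLosslessLogSol M u) (ht₁ : 0 < t₁)
    (ht : t₁ ≤ T) (ha : 0 < a) :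
    ∃ L, 0 ≤ L ∧ M * exp (1 - L) < a ∧ ∀ s ∈ Icc t₁ T, ∫ t in t₁..s, cutoffLeakage L (u t) ≤ 1 := by
  have hexp : Tendsto (fun L => M * exp (1 - L)) atTop (𝓝 0) := by
    simpa [← sub_eq_add_neg] using (tendsto_exp_atBot.comp
      (tendsto_atBot_add_const_left _ 1 tendsto_neg_atTop_atBot)).const_mul M
  obtain ⟨L, ⟨hLa, hL⟩, hL₀⟩ := (((hexp.eventually_lt_const ha).and
    ((h.tendsto_integral_cutoffLeakage ht₁ ht).eventually_lt_const one_pos)).and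
      (eventually_ge_atTop 0)).exists
  refine ⟨L, hL₀, hLa, fun s hs => (intervalIntegral.integral_mono_interval le_rfl hs.1 hs.2
    ?_ (h.intervalIntegrable_cutoffLeakage L ht₁ ht)).trans hL.le⟩
  filter_upwards [self_mem_ae_restrict measurableSet_Ioc] with t ht'
  obtain ⟨E, hE⟩ := h.isProfile (ht₁.trans ht'.1)
  exact hE.cutoffLeakage_nonneg L

/-- Adding the accumulated leakage to the functional turns the approximate Riccati inequality into
an exact one, whose solutions have a bounded lifespan independent of the cutoff. -/
theorem massExcess_nonpos (h : IsLosslessLogSol M u) (ht : 0 < t) : massExcess (u t) ≤ 0 := by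
  by_contra! hexcess
  set a := massExcess (u t) / 2 with ha
  have ha₀ : 0 < a := half_pos hexcess
  set K := 20 * (∫ y, exp y * planck y) + 20 * M * exp 1 with hK
  set B := 20 * (∫ y, exp y * u t y) + 20 + K + 1
  have hB₀ : 0 ≤ B := by
    obtain ⟨E, hE⟩ := h.isProfile ht
    have := h.bound_nonneg
    have : 0 ≤ ∫ y, exp y * planck y := integral_nonneg isProfile_planck.exp_mul_nonneg
    have : 0 ≤ ∫ y, exp y * u t y := integral_nonneg hE.exp_mul_nonneg
    positivity
  set T := t + (B + 1) / a + (1 / 1600 : ℝ)⁻¹ with hT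
  have htT : t ≤ T := by
    rw [hT, add_assoc]
    exact le_add_of_nonneg_right (by positivity)
  obtain ⟨L, hL, hLa, hleak⟩ := h.exists_cutoff_integral_cutoffLeakage_le ht htT ha₀
  refine (lt_of_add_mul_sq_max_le_deriv (c := 1 / 1600) ha₀ (by norm_num) hB₀
    (H := fun s => cutoffFunctional L (u s) + (∫ r in t..s, cutoffLeakage L (u r)) - (K + 1))
    (fun s hs => ((h.hasDerivAt_cutoffFunctional hL (ht.trans_le hs.1)).add
      (h.hasDerivAt_integral_cutoffLeakage L ht hs.1)).sub_const _) (fun s hs => ?_) ?_).false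
  · obtain ⟨E, hE⟩ := h.isProfile (ht.trans_le hs.1)
    have hriccati := hE.add_sq_max_le_integral_weakIntegrand hL
    rw [h.massExcess_eq ht hs.1, ← hK] at hriccati
    have hmax : max (cutoffFunctional L (u s) + (∫ r in t..s, cutoffLeakage L (u r)) - (K + 1)) 0
        ≤ max (cutoffFunctional L (u s) - K) 0 :=
      max_le_max_right 0 (by linarith [hleak s hs])
    have := pow_le_pow_left₀ (le_max_right _ _) hmax 2
    linarith
  · obtain ⟨E, hE⟩ := h.isProfile ht
    have := hE.le_cutoffFunctional hL
    rw [intervalIntegral.integral_same]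
    linarith

end IsLosslessLogSol

/-! ### Back to the original variables -/

section ExpSubstitution

variable (g : ℝ → ℝ)

lemma integral_Ioi_eq_integral_exp_mul_comp_exp :
    ∫ x in Ioi (0 : ℝ), g x = ∫ y, exp y * g (exp y) := by
  have h := integral_image_eq_integral_abs_deriv_smul .univ
    (fun x _ => (hasDerivAt_exp x).hasDerivWithinAt) exp_injective.injOn g
  rw [image_univ, range_exp, setIntegral_univ] at h
  simpa only [abs_exp, smul_eq_mul] using h

lemma integrableOn_Ioi_iff_integrable_exp_mul_comp_exp :
    IntegrableOn g (Ioi 0) ↔ Integrable fun y => exp y * g (exp y) := by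
  have h := integrableOn_image_iff_integrableOn_abs_deriv_smul .univ
    (fun x _ => (hasDerivAt_exp x).hasDerivWithinAt) exp_injective.injOn g
  rw [image_univ, range_exp, integrableOn_univ] at h
  simpa only [abs_exp, smul_eq_mul] using h

end ExpSubstitution

lemma integral_nhat_zero_eq_integral_planck :
    ∫ x in Ioi (0 : ℝ), nhat 0 x = ∫ y, exp y * planck y :=
  integral_Ioi_eq_integral_exp_mul_comp_exp (nhat 0)

namespace IsKompSol

variable {n : ℝ → ℝ → ℝ} {n₀ : ℝ → ℝ} {x t : ℝ}

lemma hasDerivAt_time (h : IsKompSol n n₀) (hx : 0 < x) (ht : 0 < t) :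
    HasDerivAt (fun s => n x s) (x ^ 2 * deriv (deriv fun z => n z t) x
      + (x ^ 2 + 2 * n x t) * deriv (fun z => n z t) x + (2 * x - 2) * n x t) t := by
  have hn := (h.diff_x t ht x hx).hasDerivAt
  have hn' := (h.diff_xx t ht x hx).hasDerivAt
  have hsq : HasDerivAt (fun x : ℝ => x ^ 2) (2 * x) x := by simpa using hasDerivAt_pow 2 x
  have hflux := ((hsq.fun_mul hn').fun_add
    ((hsq.fun_sub ((hasDerivAt_id x).const_mul 2)).fun_mul hn)).fun_add (hn.fun_pow 2)
  have htime := (h.diff_t x hx t ht).hasDerivAt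
  rw [h.pde x hx t ht] at htime
  refine (htime.congr_deriv hflux.deriv).congr_deriv ?_
  simp only [id, Nat.cast_ofNat]
  ring

lemma isLogKompSol (h : IsKompSol n n₀) : IsLogKompSol fun t y => n (exp y) t := by
  have hn : ∀ t, 0 < t → ∀ y, HasDerivAt (fun y => n (exp y) t)
      (deriv (fun x => n x t) (exp y) * exp y) y := fun t ht y =>
    (h.diff_x t ht _ (exp_pos y)).hasDerivAt.comp y (hasDerivAt_exp y)
  have hderiv : ∀ t, 0 < t → deriv (fun y => n (exp y) t)
      = fun y => deriv (fun x => n x t) (exp y) * exp y := fun t ht =>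
    funext fun y => (hn t ht y).deriv
  have hn' : ∀ t, 0 < t → ∀ y, HasDerivAt (fun y => deriv (fun x => n x t) (exp y) * exp y)
      (deriv (deriv fun x => n x t) (exp y) * exp y * exp y
        + deriv (fun x => n x t) (exp y) * exp y) y := fun t ht y =>
    ((h.diff_xx t ht _ (exp_pos y)).hasDerivAt.comp y (hasDerivAt_exp y)).mul (hasDerivAt_exp y)
  refine ⟨by fun_prop, by fun_prop, ?_, fun t ht y => (hn t ht y).differentiableAt,
    fun t ht => hderiv t ht ▸ fun y => (hn' t ht y).differentiableAt, fun t ht y => ?_⟩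
  · exact h.contOn.comp (f := fun p : ℝ × ℝ => (exp p.2, p.1)) (by fun_prop)
      fun p hp => ⟨exp_pos p.2, hp.1⟩
  · refine (h.hasDerivAt_time (exp_pos y) ht).congr_deriv ?_
    rw [lowerOrder, hderiv t ht, (hn' t ht y).deriv, exp_neg]
    field_simp
    ring

lemma exists_isLosslessLogSol (h : IsKompSol n n₀)
    (hloss : ∀ t, 0 < t → Tendsto (fun x => n x t) (𝓝[>] 0) (𝓝 0)) :
    ∃ M, IsLosslessLogSol M fun t y => n (exp y) t := by
  obtain ⟨M, hM⟩ := h.bounded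
  refine ⟨M, h.isLogKompSol, fun T => ?_⟩
  obtain ⟨R, hR, hdecay⟩ := h.decay (max T 1) (by positivity) 1 one_pos
  refine ⟨max 1 (R ^ 2 * M), fun t ht htT =>
    ⟨continuous_iff_continuousAt.2 fun y => (h.isLogKompSol.differentiable t ht y).continuousAt,
      fun y => h.nonneg _ t (exp_pos y) ht, fun y => hM _ t (exp_pos y) ht, fun y => ?_,
      (hloss t ht).comp (tendsto_nhdsWithin_iff.2 ⟨tendsto_exp_atBot, .of_forall exp_pos⟩), ?_⟩⟩
  · rcases le_total R (exp y) with hy | hy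
    · exact (hdecay _ hy t ht.le (lt_max_of_lt_left htT)).le.trans (le_max_left _ _)
    · exact (mul_le_mul (pow_le_pow_left₀ (exp_pos y).le hy 2) (hM _ t (exp_pos y) ht)
        (h.nonneg _ t (exp_pos y) ht) (by positivity)).trans (le_max_right _ _)
  · refine Metric.tendsto_atTop.2 fun ε hε => ?_
    obtain ⟨R, hR, hdecay⟩ := h.decay (t + 1) (by linarith) ε hε
    refine ⟨log R, fun y hy => ?_⟩
    rw [Real.dist_eq, sub_zero,
      abs_of_nonneg (mul_nonneg (by positivity) (h.nonneg _ t (exp_pos y) ht))]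
    exact hdecay _ ((log_le_iff_le_exp hR).1 hy) t ht.le (lt_add_one t)

lemma integral_exp_mul_eq_integral_init {M : ℝ} (h : IsKompSol n n₀)
    (hu : IsLosslessLogSol M fun t y => n (exp y) t) (hn₀ : IntegrableOn n₀ (Ioi 0)) (ht : 0 < t) :
    ∫ y, exp y * n (exp y) t = ∫ x in Ioi 0, n₀ x := by
  have hle : ∀ᶠ s in 𝓝[>] 0, |(∫ y, exp y * n (exp y) t) - ∫ x in Ioi 0, n₀ x|
      ≤ ∫ x in Ioi 0, |n x s - n₀ x| := by
    filter_upwards [Ioc_mem_nhdsGT ht] with s hs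
    obtain ⟨E, hE⟩ := hu.isProfile hs.1
    have hint : IntegrableOn (fun x => n x s) (Ioi 0) :=
      (integrableOn_Ioi_iff_integrable_exp_mul_comp_exp _).2 hE.integrable_exp_mul
    rw [hu.integral_exp_mul_eq hs.1 hs.2,
      ← integral_Ioi_eq_integral_exp_mul_comp_exp fun x => n x s, ← integral_sub hint hn₀]
    exact abs_integral_le_integral_abs
  exact sub_eq_zero.1 (abs_nonpos_iff.1 (ge_of_tendsto h.l1init hle))

theorem integral_init_le_integral_nhat_zero (h : IsKompSol n n₀)
    (hloss : ∀ t, 0 < t → Tendsto (fun x => n x t) (𝓝[>] 0) (𝓝 0)) :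
    ∫ x in Ioi 0, n₀ x ≤ ∫ x in Ioi 0, nhat 0 x := by
  rw [integral_nhat_zero_eq_integral_planck]
  by_cases hn₀ : IntegrableOn n₀ (Ioi 0)
  · obtain ⟨M, hu⟩ := h.exists_isLosslessLogSol hloss
    rw [← h.integral_exp_mul_eq_integral_init hu hn₀ one_pos]
    exact sub_nonpos.1 (hu.massExcess_nonpos one_pos)
  · rw [integral_undef hn₀]
    exact integral_nonneg isProfile_planck.exp_mul_nonneg

end IsKompSol

/-! ### The critical mass -/

lemma integral_sq_mul_exp_neg_mul_Ioi {r : ℝ} (hr : 0 < r) :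
    ∫ x in Ioi (0 : ℝ), x ^ 2 * exp (-(r * x)) = 2 / r ^ 3 := by
  have h := Real.integral_rpow_mul_exp_neg_mul_Ioi (a := (2 : ℕ) + 1) (by positivity) hr
  rw [Gamma_nat_eq_factorial, add_sub_cancel_right] at h
  simp only [rpow_natCast] at h
  rw [h]
  norm_num
  norm_cast
  ring

lemma integrableOn_sq_mul_exp_neg_mul_Ioi {r : ℝ} (hr : 0 < r) :
    IntegrableOn (fun x : ℝ => x ^ 2 * exp (-(r * x))) (Ioi 0) := by
  refine not_imp_comm.1 integral_undef ?_
  rw [integral_sq_mul_exp_neg_mul_Ioi hr]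
  positivity

lemma hasSum_nhat_zero {x : ℝ} (hx : 0 < x) :
    HasSum (fun k : ℕ => x ^ 2 * exp (-((k + 1) * x))) (nhat 0 x) := by
  have hlt : exp (-x) < 1 := exp_lt_one_iff.2 (neg_neg_of_pos hx)
  have hterm (k : ℕ) : x ^ 2 * exp (-((k + 1) * x)) = x ^ 2 * exp (-x) * exp (-x) ^ k := by
    rw [mul_assoc, ← exp_nat_mul, ← exp_add]
    ring_nf
  have hsum : nhat 0 x = x ^ 2 * exp (-x) * (1 - exp (-x))⁻¹ := by
    rw [nhat, add_zero, mul_assoc, div_eq_mul_inv, ← inv_inv (exp (-x)), ← mul_inv, exp_neg,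
      inv_inv, mul_sub, mul_one, mul_inv_cancel₀ (exp_pos x).ne']
  rw [hsum]
  simpa only [hterm] using
    (hasSum_geometric_of_lt_one (exp_pos (-x)).le hlt).mul_left (x ^ 2 * exp (-x))

lemma integral_nhat_zero :
    ∫ x in Ioi (0 : ℝ), nhat 0 x = 2 * ∑' k : ℕ, (1 : ℝ) / (k + 1) ^ 3 := by
  have hint : ∀ k : ℕ, ∫ x in Ioi (0 : ℝ), x ^ 2 * exp (-((k + 1) * x)) = 2 * (1 / (k + 1) ^ 3) :=
    fun k => by rw [integral_sq_mul_exp_neg_mul_Ioi k.cast_add_one_pos, mul_one_div]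
  have hsummable : Summable fun k : ℕ => ∫ x in Ioi (0 : ℝ), ‖x ^ 2 * exp (-((k + 1) * x))‖ := by
    simp only [norm_mul, norm_pow, Real.norm_eq_abs, sq_abs, abs_exp, hint]
    refine Summable.mul_left 2 ?_
    simpa using (summable_nat_add_iff 1).2 (summable_one_div_nat_pow.2 (by norm_num : 1 < 3))
  have hsum := hasSum_integral_of_summable_integral_norm
    (fun k : ℕ => integrableOn_sq_mul_exp_neg_mul_Ioi k.cast_add_one_pos) hsummable
  rw [setIntegral_congr_fun measurableSet_Ioi fun x hx => (hasSum_nhat_zero hx).tsum_eq.symm,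
    ← hsum.tsum_eq, ← tsum_mul_left]
  simp only [hint]

theorem onset_of_loss_mass_condition
    (n : ℝ → ℝ → ℝ) (n₀ : ℝ → ℝ)
    (hsol : IsKompSol n n₀)
    (h0nonneg : ∀ x : ℝ, 0 < x → 0 ≤ n₀ x)
    (h0bdd : ∃ C : ℝ, ∀ x : ℝ, 0 < x → n₀ x ≤ C)
    (h0decay : Filter.Tendsto (fun x => x ^ 2 * n₀ x) Filter.atTop (nhds 0))
    (b : ℝ → ℝ)
    (hb : ∀ t : ℝ, 0 < t →
      Filter.Tendsto (fun x => n x t) (𝓝[>] (0:ℝ)) (nhds (b t)))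
    (hne : ∃ x : ℝ, 0 < x ∧ n₀ x ≠ 0)
    (hmass : (∫ x in Set.Ioi (0:ℝ), nhat 0 x) < ∫ x in Set.Ioi (0:ℝ), n₀ x) :
    ((∫ x in Set.Ioi (0:ℝ), nhat 0 x) = 2 * ∑' k : ℕ, (1:ℝ) / (k + 1) ^ 3) ∧
    ∃ t : ℝ, 0 < t ∧ 0 < b t := by
  refine ⟨integral_nhat_zero, ?_⟩
  by_contra! hnonpos
  have hnonneg : ∀ t, 0 < t → 0 ≤ b t := fun t ht => ge_of_tendsto (hb t ht) <| by
    filter_upwards [self_mem_nhdsWithin] with x hx using hsol.nonneg x t hx ht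
  have hloss : ∀ t, 0 < t → Tendsto (fun x => n x t) (𝓝[>] 0) (𝓝 0) := fun t ht =>
    le_antisymm (hnonpos t ht) (hnonneg t ht) ▸ hb t ht
  exact hmass.not_ge (hsol.integral_init_le_integral_nhat_zero hloss)
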